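/- arXiv:1608.08443 — 2 statements merged into one kernel-verified Lean document; each statement's English description precedes it below -/
import Mathlib

section
/- Let s ∈ (0,1), let (a,b) be a bounded open interval, and let n ∈ ℕ∪{0}. Then for every polynomial p of degree at most n, the function x ↦ (−Δ)^s_ω p(x) coincides on (a,b) with a polynomial of degree at most n, and for all polynomials p, q of degree at most n, ∫_a^b ((−Δ)^s_ω p)(x) q(x) ω^s(x) dx = ∫_a^b p(x) ((−Δ)^s_ω q)(x) ω^s(x) dx; that is, (−Δ)^s_ω restricted to polynomials of degree at most n is self-adjoint with respect to the inner product (φ,ψ) = ∫_a^b φ ψ ω^s. -/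
open MeasureTheory Filter Set

/-- The normalization constant `C₁(s) = 2^{2s} s Γ(s+1/2) / (√π Γ(1−s))`. -/
noncomputable def C1 (s : ℝ) : ℝ :=
  2 ^ (2 * s) * s * Real.Gamma (s + 1 / 2) / (Real.sqrt Real.pi * Real.Gamma (1 - s))

/-- `WFL s a b φ x L` means the weighted fractional Laplacian `(−Δ)^s_ω φ (x)`
on the interval `(a,b)` (defined as a principal value) exists and equals `L`. -/
def WFL (s a b : ℝ) (φ : ℝ → ℝ) (x L : ℝ) : Prop :=
  Filter.Tendsto
    (fun ε : ℝ => (C1 s / (2 * s)) *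
      ∫ y in Set.Ioo a b \ Set.Ioo (x - ε) (x + ε),
        Real.sign (x - y) * |x - y| ^ (-(2 * s)) *
          deriv (fun t => (t - a) ^ s * (b - t) ^ s * φ t) y)
    (nhdsWithin 0 (Set.Ioi 0)) (nhds L)

/-- antiderivative of `τ ^ (-2s)` vanishing at `D`. -/
noncomputable def kk (s D τ : ℝ) : ℝ :=
  if s = 1 / 2 then Real.log τ - Real.log D
  else (τ ^ (1 - 2 * s) - D ^ (1 - 2 * s)) / (1 - 2 * s)

lemma kk_measurable (s D : ℝ) : Measurable (kk s D) := by
  unfold kk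
  split_ifs
  · fun_prop
  · fun_prop

lemma kk_hasDerivAt (s D τ : ℝ) (hτ : 0 < τ) : HasDerivAt (kk s D) (τ ^ (-(2 * s))) τ := by
  unfold kk
  split_ifs with h
  · have := (Real.hasDerivAt_log hτ.ne').sub_const (Real.log D)
    refine this.congr_deriv ?_
    rw [h]; norm_num [Real.rpow_neg_one]
  · have h1 : (1 - 2 * s) ≠ 0 := by intro h2; apply h; linarith
    have := ((Real.hasDerivAt_rpow_const (p := 1 - 2 * s) (Or.inl hτ.ne')).sub_const
      (D ^ (1 - 2 * s))).div_const (1 - 2 * s)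
    refine this.congr_deriv ?_
    rw [mul_div_cancel_left₀ _ h1]; congr 1; ring

lemma kk_self (s D : ℝ) : kk s D D = 0 := by
  unfold kk; split_ifs <;> simp

lemma kk_identity (s D τ : ℝ) :
    τ ^ (1 - 2 * s) = D ^ (1 - 2 * s) + (1 - 2 * s) * kk s D τ := by
  unfold kk
  split_ifs with h
  · subst h; norm_num
  · have h1 : (1 - 2 * s) ≠ 0 := by intro h2; apply h; linarith
    field_simp; ring

lemma kk_mono (s D : ℝ) : MonotoneOn (kk s D) (Ioi 0) := by
  apply monotoneOn_of_deriv_nonneg (convex_Ioi 0)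
  · exact fun x hx => (kk_hasDerivAt s D x hx).continuousAt.continuousWithinAt
  · intro x hx; rw [interior_Ioi] at hx
    exact (kk_hasDerivAt s D x hx).differentiableAt.differentiableWithinAt
  · intro x hx; rw [interior_Ioi] at hx
    rw [(kk_hasDerivAt s D x hx).deriv]
    exact Real.rpow_nonneg (le_of_lt hx) _

lemma kk_nonpos (s D τ : ℝ) (hτ : 0 < τ) (hD : τ ≤ D) : kk s D τ ≤ 0 := by
  rw [← kk_self s D]; exact kk_mono s D hτ (lt_of_lt_of_le hτ hD) hD

lemma kk_bound (s D τ : ℝ) (hs : s ∈ Ioo (0 : ℝ) 1) (hτ : 0 < τ) (hD : τ ≤ D) :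
    |kk s D τ| ≤ D ^ (1 - s) / s * τ ^ (-s) := by
  have hD0 : 0 < D := lt_of_lt_of_le hτ hD
  rw [abs_of_nonpos (kk_nonpos s D τ hτ hD)]
  have hder : ∀ x, 0 < x → HasDerivAt (fun x => kk s D x + D ^ (1 - s) / s * x ^ (-s))
      (x ^ (-(2 * s)) + D ^ (1 - s) / s * (-s * x ^ (-s - 1))) x := fun x hx =>
    (kk_hasDerivAt s D x hx).add ((Real.hasDerivAt_rpow_const (Or.inl hx.ne')).const_mul _)
  have hanti : AntitoneOn (fun x => kk s D x + D ^ (1 - s) / s * x ^ (-s)) (Ioc 0 D) := by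
    apply antitoneOn_of_deriv_nonpos (convex_Ioc 0 D)
    · exact fun x hx => (hder x hx.1).continuousAt.continuousWithinAt
    · intro x hx; rw [interior_Ioc] at hx
      exact (hder x hx.1).differentiableAt.differentiableWithinAt
    · intro x hx; rw [interior_Ioc] at hx
      rw [(hder x hx.1).deriv]
      have e : D ^ (1 - s) / s * (-s * x ^ (-s - 1)) = - (D ^ (1 - s) * x ^ (-s - 1)) := by
        field_simp [hs.1.ne']
      have e2 : x ^ (-(2 * s)) = x ^ (1 - s) * x ^ (-s - 1) := by
        rw [← Real.rpow_add hx.1]; congr 1; ring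
      rw [e, e2]
      have : x ^ (1 - s) ≤ D ^ (1 - s) :=
        Real.rpow_le_rpow hx.1.le hx.2.le (by linarith [hs.2])
      nlinarith [Real.rpow_nonneg hx.1.le (-s - 1)]
  have := hanti ⟨hτ, hD⟩ ⟨hD0, le_rfl⟩ hD
  simp only [kk_self] at this
  have h2 : 0 ≤ D ^ (1 - s) / s * D ^ (-s) := by
    have := hs.1; positivity
  linarith

lemma kk_lip (s D ε : ℝ) (hs : s ∈ Ioo (0 : ℝ) 1) (hε : 0 < ε) (x y : ℝ) (hx : ε ≤ x) (hy : ε ≤ y) :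
    |kk s D y - kk s D x| ≤ ε ^ (-(2 * s)) * |y - x| := by
  apply Convex.norm_image_sub_le_of_norm_hasDerivWithin_le (s := Ici ε)
    (f' := fun τ => τ ^ (-(2 * s)))
  · exact fun x hx => (kk_hasDerivAt s D x (lt_of_lt_of_le hε hx)).hasDerivWithinAt
  · intro x hx
    rw [Real.norm_of_nonneg (Real.rpow_nonneg (hε.le.trans hx) _)]
    exact Real.rpow_le_rpow_of_nonpos hε hx (by linarith [hs.1])
  · exact convex_Ici ε
  · exact hx
  · exact hy

/-- the truncated kernel -/
noncomputable def Kr (s z : ℝ) : ℝ := Real.sign z * |z| ^ (-(2 * s))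

lemma sign_measurable' : Measurable Real.sign := by
  unfold Real.sign
  exact Measurable.ite (measurableSet_lt measurable_id measurable_const) measurable_const
    (Measurable.ite (measurableSet_lt measurable_const measurable_id) measurable_const
      measurable_const)

lemma Kr_measurable (s : ℝ) : Measurable (Kr s) := by
  unfold Kr
  exact sign_measurable'.mul (by fun_prop)

lemma sign_abs_le (z : ℝ) : |Real.sign z| ≤ 1 := by
  rcases Real.sign_apply_eq z with h | h | h <;> rw [h] <;> norm_num

lemma Kr_bound (s ε z : ℝ) (hs : s ∈ Ioo (0 : ℝ) 1) (hε : 0 < ε) (hz : ε ≤ |z|) :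
    |Kr s z| ≤ ε ^ (-(2 * s)) := by
  unfold Kr
  rw [abs_mul, abs_of_nonneg (Real.rpow_nonneg (abs_nonneg z) _)]
  have h1 := Real.rpow_le_rpow_of_nonpos hε hz (show -(2 * s) ≤ 0 by linarith [hs.1])
  have h2 := Real.rpow_nonneg (abs_nonneg z) (-(2 * s))
  nlinarith [sign_abs_le z]

lemma z_mul_Kr (s z : ℝ) (hz : z ≠ 0) : z * Kr s z = |z| ^ (1 - 2 * s) := by
  unfold Kr
  have : z * Real.sign z = |z| := by
    rcases lt_or_gt_of_ne hz with h | h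
    · rw [Real.sign_of_neg h, abs_of_neg h]; ring
    · rw [Real.sign_of_pos h, abs_of_pos h]; ring
  rw [← mul_assoc, this, show 1 - 2 * s = 1 + -(2 * s) by ring,
    Real.rpow_add (abs_pos.2 hz), Real.rpow_one]

lemma keps_hasDerivAt (s D ε x y : ℝ) (hε : 0 < ε) (h : |x - y| ≠ ε) :
    HasDerivAt (fun x => kk s D (max |x - y| ε)) (if ε ≤ |x - y| then Kr s (x - y) else 0) x := by
  have hc : Continuous (fun x : ℝ => |x - y|) := by fun_prop
  rcases lt_or_gt_of_ne h with h | h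
  · rw [if_neg (not_le.2 h)]
    have : ∀ᶠ z in nhds x, |z - y| < ε := hc.continuousAt.eventually (gt_mem_nhds h)
    apply (hasDerivAt_const x (kk s D ε)).congr_of_eventuallyEq
    filter_upwards [this] with z hz
    rw [max_eq_right hz.le]
  · rw [if_pos h.le]
    have : ∀ᶠ z in nhds x, ε < |z - y| := hc.continuousAt.eventually (lt_mem_nhds h)
    have hne : x - y ≠ 0 := by
      intro h0; rw [h0] at h; simp at h; linarith
    have hd : HasDerivAt (fun z => kk s D |z - y|) (Kr s (x - y)) x := by
      have h1 : HasDerivAt (fun z : ℝ => |z - y|) (Real.sign (x - y)) x := by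
        rcases lt_or_gt_of_ne hne with hn | hn
        · have := (hasDerivAt_abs_neg hn).comp x ((hasDerivAt_id x).sub_const y)
          rw [Real.sign_of_neg hn]
          simpa [Function.comp_def] using this
        · have := (hasDerivAt_abs_pos hn).comp x ((hasDerivAt_id x).sub_const y)
          rw [Real.sign_of_pos hn]
          simpa [Function.comp_def] using this
      have h2 := (kk_hasDerivAt s D |x - y| (abs_pos.2 hne)).comp x h1
      unfold Kr
      rw [mul_comm]
      exact h2
    apply hd.congr_of_eventuallyEq
    filter_upwards [this] with z hz
    rw [max_eq_left hz.le]

lemma abs_rpow_left (x h r : ℝ) (hh : 0 ≤ h) (hr : -1 < r) :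
    IntervalIntegrable (fun y => |x - y| ^ r) volume (x - h) x ∧
      ∫ y in (x - h)..x, |x - y| ^ r = h ^ (r + 1) / (r + 1) := by
  have h0 : IntervalIntegrable (fun t : ℝ => t ^ r) volume 0 h :=
    intervalIntegral.intervalIntegrable_rpow' hr
  have h1 := (h0.comp_sub_left x).symm
  rw [sub_zero] at h1
  have e : EqOn (fun y => (x - y) ^ r) (fun y => |x - y| ^ r) (uIcc (x - h) x) := by
    intro y hy
    rw [uIcc_of_le (by linarith)] at hy
    simp only
    rw [abs_of_nonneg (by linarith [hy.2])]
  constructor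
  · exact h1.congr (fun y hy => e (uIoc_subset_uIcc hy))
  · rw [← intervalIntegral.integral_congr e,
      intervalIntegral.integral_comp_sub_left (fun t => t ^ r) x]
    rw [sub_self, sub_sub_cancel, integral_rpow (Or.inl hr), Real.zero_rpow (by linarith), sub_zero]

lemma abs_rpow_right (x h r : ℝ) (hh : 0 ≤ h) (hr : -1 < r) :
    IntervalIntegrable (fun y => |x - y| ^ r) volume x (x + h) ∧
      ∫ y in x..(x + h), |x - y| ^ r = h ^ (r + 1) / (r + 1) := by
  have h0 : IntervalIntegrable (fun t : ℝ => t ^ r) volume 0 h :=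
    intervalIntegral.intervalIntegrable_rpow' hr
  have h1 := (h0.comp_sub_right x)
  rw [zero_add, add_comm h x] at h1
  have e : EqOn (fun y => (y - x) ^ r) (fun y => |x - y| ^ r) (uIcc x (x + h)) := by
    intro y hy
    rw [uIcc_of_le (by linarith)] at hy
    simp only
    rw [abs_sub_comm, abs_of_nonneg (by linarith [hy.1])]
  constructor
  · exact h1.congr (fun y hy => e (uIoc_subset_uIcc hy))
  · rw [← intervalIntegral.integral_congr e,
      intervalIntegral.integral_comp_sub_right (fun t => t ^ r) x]
    rw [sub_self, add_sub_cancel_left, integral_rpow (Or.inl hr), Real.zero_rpow (by linarith),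
      sub_zero]

lemma abs_rpow_ball (x h r : ℝ) (hh : 0 ≤ h) (hr : -1 < r) :
    IntegrableOn (fun y => |x - y| ^ r) (Ioo (x - h) (x + h)) ∧
      ∫ y in Ioo (x - h) (x + h), |x - y| ^ r = 2 * (h ^ (r + 1) / (r + 1)) := by
  obtain ⟨i1, e1⟩ := abs_rpow_left x h r hh hr
  obtain ⟨i2, e2⟩ := abs_rpow_right x h r hh hr
  constructor
  · exact (intervalIntegrable_iff_integrableOn_Ioo_of_le (by linarith)).1 (i1.trans i2)
  · rw [← integral_Ioc_eq_integral_Ioo, ← intervalIntegral.integral_of_le (by linarith),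
      ← intervalIntegral.integral_add_adjacent_intervals i1 i2, e1, e2]; ring

/-- locally bounded on `(a,b)` -/
def LocBdd (a b : ℝ) (f : ℝ → ℝ) : Prop :=
  ∀ c d, a < c → d < b → ∃ M, 0 ≤ M ∧ ∀ y ∈ Icc c d, |f y| ≤ M

/-- truncated operator -/
noncomputable def Te (s a b : ℝ) (f : ℝ → ℝ) (ε x : ℝ) : ℝ :=
  ∫ y in Ioo a b \ Ioo (x - ε) (x + ε), Kr s (x - y) * f y

/-- potential -/
noncomputable def Vp (s a b : ℝ) (f : ℝ → ℝ) (x : ℝ) : ℝ :=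
  ∫ y in Ioo a b, kk s (b - a) |x - y| * f y

lemma mem_ball_iff (x y ε : ℝ) : y ∈ Ioo (x - ε) (x + ε) ↔ |x - y| < ε := by
  rw [abs_lt, mem_Ioo]; constructor <;> rintro ⟨h1, h2⟩ <;> constructor <;> linarith

lemma dist_lt_of_mem {a b x y : ℝ} (hx : x ∈ Ioo a b) (hy : y ∈ Ioo a b) : |x - y| < b - a := by
  rw [abs_lt]; constructor <;> linarith [hx.1, hx.2, hy.1, hy.2]

lemma ae_ne (x : ℝ) (S : Set ℝ) : ∀ᵐ y ∂(volume.restrict S), y ≠ x := by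
  apply ae_restrict_of_ae
  simp [ae_iff]

lemma sing_integrable (a b r : ℝ) (f : ℝ → ℝ) (hf : IntegrableOn f (Ioo a b))
    (hl : LocBdd a b f) (x : ℝ) (hx : x ∈ Ioo a b) (hr : -1 < r) (hr0 : r ≤ 0) :
    IntegrableOn (fun y => |x - y| ^ r * f y) (Ioo a b) := by
  set δ := min (x - a) (b - x) / 2 with hδ
  have hδ0 : 0 < δ := by
    have : 0 < min (x - a) (b - x) := lt_min (by linarith [hx.1]) (by linarith [hx.2])
    linarith
  have hδ1 : δ < x - a := by have := min_le_left (x - a) (b - x); have := hx.1; linarith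
  have hδ2 : δ < b - x := by have := min_le_right (x - a) (b - x); have := hx.2; linarith
  obtain ⟨M, hM0, hM⟩ := hl (x - δ) (x + δ) (by linarith) (by linarith)
  have hi : IntegrableOn (fun y => |x - y| ^ r) (Ioo a b) := by
    refine (abs_rpow_ball x (b - a) r (by linarith) hr).1.mono_set ?_
    intro y hy
    rw [mem_ball_iff]; exact dist_lt_of_mem hx hy
  refine Integrable.mono' (g := fun y => M * |x - y| ^ r + δ ^ r * |f y|)
    ((hi.const_mul M).add (hf.abs.const_mul _)) ?_ ?_
  · exact hi.aestronglyMeasurable.mul hf.aestronglyMeasurable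
  · refine Eventually.of_forall fun y => ?_
    have h0 : 0 ≤ |x - y| ^ r := Real.rpow_nonneg (abs_nonneg _) _
    have h1 : 0 ≤ δ ^ r := Real.rpow_nonneg hδ0.le _
    rw [norm_mul, Real.norm_of_nonneg h0, Real.norm_eq_abs]
    by_cases h : |x - y| < δ
    · have := (mem_ball_iff x y δ).2 h
      have h3 := hM y ⟨this.1.le, this.2.le⟩
      nlinarith [mul_nonneg h1 (abs_nonneg (f y)), mul_le_mul_of_nonneg_left h3 h0]
    · have h2 := Real.rpow_le_rpow_of_nonpos hδ0 (not_lt.1 h) hr0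
      nlinarith [mul_nonneg hM0 h0, mul_le_mul_of_nonneg_right h2 (abs_nonneg (f y))]

lemma Vp_integrable (s a b : ℝ) (hs : s ∈ Ioo (0 : ℝ) 1) (hab : a < b) (f : ℝ → ℝ)
    (hf : IntegrableOn f (Ioo a b))
    (hl : LocBdd a b f) (x : ℝ) (hx : x ∈ Ioo a b) :
    IntegrableOn (fun y => kk s (b - a) |x - y| * f y) (Ioo a b) := by
  have h := (sing_integrable a b (-s) f hf hl x hx (by linarith [hs.2])
    (by linarith [hs.1])).norm.const_mul ((b - a) ^ (1 - s) / s)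
  refine Integrable.mono' h ?_ ?_
  · refine AEStronglyMeasurable.mul ?_ hf.aestronglyMeasurable
    have hm := kk_measurable s (b - a)
    exact (hm.comp (by fun_prop : Measurable fun y => |x - y|)).aestronglyMeasurable
  · filter_upwards [ae_ne x (Ioo a b), ae_restrict_mem measurableSet_Ioo] with y hy hy2
    rw [norm_mul, norm_mul, ← mul_assoc]
    gcongr
    rw [Real.norm_eq_abs, Real.norm_of_nonneg (Real.rpow_nonneg (abs_nonneg _) _)]
    exact kk_bound s (b - a) _ hs (abs_pos.2 (sub_ne_zero.2 hy.symm)) (dist_lt_of_mem hx hy2).le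

/-- regularized potential -/
noncomputable def Ve (s a b : ℝ) (f : ℝ → ℝ) (ε x : ℝ) : ℝ :=
  ∫ y in Ioo a b, kk s (b - a) (max |x - y| ε) * f y

lemma Ve_meas (s a b : ℝ) (f : ℝ → ℝ) (hf : IntegrableOn f (Ioo a b)) (ε x : ℝ) :
    AEStronglyMeasurable (fun y => kk s (b - a) (max |x - y| ε) * f y)
      (volume.restrict (Ioo a b)) := by
  refine AEStronglyMeasurable.mul ?_ hf.aestronglyMeasurable
  have hm := kk_measurable s (b - a)
  exact (hm.comp (by fun_prop : Measurable fun y => max |x - y| ε)).aestronglyMeasurable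

lemma Ve_tendsto (s a b : ℝ) (hs : s ∈ Ioo (0 : ℝ) 1) (hab : a < b) (f : ℝ → ℝ)
    (hf : IntegrableOn f (Ioo a b))
    (hl : LocBdd a b f) (x : ℝ) (hx : x ∈ Ioo a b) :
    Tendsto (fun ε => Ve s a b f ε x) (nhdsWithin 0 (Ioi 0)) (nhds (Vp s a b f x)) := by
  unfold Ve Vp
  apply tendsto_integral_filter_of_dominated_convergence
    (fun y => ‖kk s (b - a) |x - y| * f y‖)
  · exact Eventually.of_forall fun ε => Ve_meas s a b f hf ε x
  · have h1 : ∀ᶠ ε : ℝ in nhdsWithin 0 (Ioi 0), ε < b - a :=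
      (nhdsWithin_le_nhds) (gt_mem_nhds (by linarith))
    filter_upwards [h1, self_mem_nhdsWithin] with ε h1 h2
    filter_upwards [ae_ne x (Ioo a b), ae_restrict_mem measurableSet_Ioo] with y hy hy2
    rw [norm_mul, norm_mul]
    gcongr
    have hp : 0 < |x - y| := abs_pos.2 (sub_ne_zero.2 hy.symm)
    have hd := (dist_lt_of_mem hx hy2).le
    rw [Real.norm_of_nonpos (kk_nonpos s _ _ (lt_max_of_lt_left hp) (max_le hd h1.le)),
      Real.norm_of_nonpos (kk_nonpos s _ _ hp hd)]
    exact neg_le_neg (kk_mono s _ hp (lt_max_of_lt_left hp) (le_max_left _ _))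
  · exact (Vp_integrable s a b hs hab f hf hl x hx).norm
  · filter_upwards [ae_ne x (Ioo a b)] with y hy
    have hp : 0 < |x - y| := abs_pos.2 (sub_ne_zero.2 hy.symm)
    have h1 : ∀ᶠ ε : ℝ in nhdsWithin 0 (Ioi 0), ε < |x - y| :=
      (nhdsWithin_le_nhds) (gt_mem_nhds hp)
    apply tendsto_const_nhds.congr'
    filter_upwards [h1] with ε h
    rw [max_eq_left h.le]

lemma Ve_hasDerivAt (s a b : ℝ) (hs : s ∈ Ioo (0 : ℝ) 1) (f : ℝ → ℝ)
    (hf : IntegrableOn f (Ioo a b)) (ε : ℝ) (hε : 0 < ε) (x : ℝ) :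
    HasDerivAt (Ve s a b f ε) (Te s a b f ε x) x := by
  have hlip : ∀ y x z : ℝ, |kk s (b - a) (max |x - y| ε) - kk s (b - a) (max |z - y| ε)|
      ≤ ε ^ (-(2 * s)) * |x - z| := by
    intro y x z
    refine (kk_lip s (b - a) ε hs hε _ _ (le_max_right _ _) (le_max_right _ _)).trans ?_
    refine mul_le_mul_of_nonneg_left ?_ (Real.rpow_nonneg hε.le _)
    refine (abs_max_sub_max_le_abs |x - y| |z - y| ε).trans ((abs_abs_sub_abs_le_abs_sub _ _).trans ?_)
    apply le_of_eq; congr 1; ring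
  have key := hasDerivAt_integral_of_dominated_loc_of_lip (μ := volume.restrict (Ioo a b))
    (F := fun x y => kk s (b - a) (max |x - y| ε) * f y) (x₀ := x) (s := univ)
    (F' := fun y => (Ioo (x - ε) (x + ε))ᶜ.indicator (fun y => Kr s (x - y) * f y) y)
    (bound := fun y => ε ^ (-(2 * s)) * |f y|) univ_mem
    (Eventually.of_forall fun z => Ve_meas s a b f hf ε z) ?_ ?_ ?_ ?_ ?_
  · have := key.2
    rw [setIntegral_indicator measurableSet_Ioo.compl] at this
    exact this
  · -- integrable
    refine Integrable.mono' (g := fun y => (|kk s (b - a) (max |0| ε)| +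
      ε ^ (-(2 * s)) * (|x| + |a| + |b|)) * |f y|)
      (hf.abs.const_mul _) (Ve_meas s a b f hf ε x) ?_
    filter_upwards [ae_restrict_mem measurableSet_Ioo] with y hy
    rw [norm_mul, Real.norm_eq_abs, Real.norm_eq_abs]
    gcongr
    have h1 := hlip y x y
    rw [sub_self] at h1
    have h2 : |x - y| ≤ |x| + |a| + |b| := by
      rw [abs_le]
      constructor <;> cases abs_cases x <;> cases abs_cases a <;> cases abs_cases b <;>
        linarith [hy.1, hy.2]
    have h3 : ε ^ (-(2 * s)) * |x - y| ≤ ε ^ (-(2 * s)) * (|x| + |a| + |b|) := by gcongr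
    have h4 := abs_sub_abs_le_abs_sub (kk s (b - a) (max |x - y| ε)) (kk s (b - a) (max |0| ε))
    linarith
  · refine AEStronglyMeasurable.indicator ?_ measurableSet_Ioo.compl
    refine AEStronglyMeasurable.mul ?_ hf.aestronglyMeasurable
    exact ((Kr_measurable s).comp (by fun_prop : Measurable fun y => x - y)).aestronglyMeasurable
  · refine Eventually.of_forall fun y => ?_
    apply LipschitzOnWith.of_dist_le_mul
    intro u _ v _
    rw [Real.dist_eq, Real.dist_eq, ← sub_mul, abs_mul]
    simp only [Real.coe_nnabs, abs_mul, abs_abs]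
    rw [abs_of_nonneg (Real.rpow_nonneg hε.le _)]
    have := hlip y u v
    nlinarith [mul_le_mul_of_nonneg_right this (abs_nonneg (f y))]
  · exact hf.abs.const_mul _
  · filter_upwards [ae_ne (x - ε) (Ioo a b), ae_ne (x + ε) (Ioo a b)] with y h1 h2
    have h3 : |x - y| ≠ ε := by
      intro h
      rcases (abs_eq hε.le).1 h with h | h
      · apply h1; linarith
      · apply h2; linarith
    refine ((keps_hasDerivAt s (b - a) ε x y hε h3).mul_const (f y)).congr_deriv ?_
    by_cases h : ε ≤ |x - y|
    · rw [if_pos h, indicator_of_mem]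
      rw [mem_compl_iff, mem_ball_iff]; exact not_lt.2 h
    · rw [if_neg h, indicator_of_notMem, zero_mul]
      rw [mem_compl_iff, mem_ball_iff]; simpa using h

/-- locally uniform convergence with a rate -/
def LU (s a b : ℝ) (F : ℝ → ℝ → ℝ) (g : ℝ → ℝ) : Prop :=
  ∀ c d, a < c → d < b → ∃ C, ∀ᶠ ε : ℝ in nhdsWithin 0 (Ioi 0), ∀ x ∈ Icc c d,
    |F ε x - g x| ≤ C * ε ^ (2 - 2 * s)

lemma rate_tendsto (s C : ℝ) (hs : s ∈ Ioo (0 : ℝ) 1) :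
    Tendsto (fun ε : ℝ => C * ε ^ (2 - 2 * s)) (nhdsWithin 0 (Ioi 0)) (nhds 0) := by
  have hp : 0 < 2 - 2 * s := by linarith [hs.2]
  have h : ContinuousAt (fun ε : ℝ => C * ε ^ (2 - 2 * s)) 0 :=
    (Real.continuousAt_rpow_const 0 _ (Or.inr hp.le)).const_mul C
  have h2 := h.tendsto
  simp only [Real.zero_rpow hp.ne', mul_zero] at h2
  exact h2.mono_left nhdsWithin_le_nhds

lemma LU.tendsto {s a b : ℝ} (hs : s ∈ Ioo (0 : ℝ) 1) {F : ℝ → ℝ → ℝ} {g : ℝ → ℝ}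
    (h : LU s a b F g) (x : ℝ) (hx : x ∈ Ioo a b) :
    Tendsto (fun ε => F ε x) (nhdsWithin 0 (Ioi 0)) (nhds (g x)) := by
  obtain ⟨C, hC⟩ := h x x hx.1 hx.2
  rw [tendsto_iff_norm_sub_tendsto_zero]
  refine squeeze_zero' (Eventually.of_forall fun _ => norm_nonneg _) ?_ (rate_tendsto s C hs)
  filter_upwards [hC] with ε h
  exact h x ⟨le_rfl, le_rfl⟩

lemma LU.locUnif {s a b : ℝ} (hs : s ∈ Ioo (0 : ℝ) 1) {F : ℝ → ℝ → ℝ} {g : ℝ → ℝ}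
    (h : LU s a b F g) : TendstoLocallyUniformlyOn F g (nhdsWithin 0 (Ioi 0)) (Ioo a b) := by
  rw [Metric.tendstoLocallyUniformlyOn_iff]
  intro η hη x hx
  obtain ⟨c, hc1, hc2⟩ := exists_between hx.1
  obtain ⟨d, hd1, hd2⟩ := exists_between hx.2
  obtain ⟨C, hC⟩ := h c d hc1 hd2
  refine ⟨Icc c d, mem_nhdsWithin_of_mem_nhds (Icc_mem_nhds hc2 hd1), ?_⟩
  filter_upwards [hC, (rate_tendsto s C hs).eventually (gt_mem_nhds hη)] with ε h1 h2 y hy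
  rw [dist_comm, Real.dist_eq]
  exact (h1 y hy).trans_lt h2

lemma Vp_hasDerivAt (s a b : ℝ) (hs : s ∈ Ioo (0 : ℝ) 1) (hab : a < b) (f : ℝ → ℝ)
    (hf : IntegrableOn f (Ioo a b)) (hl : LocBdd a b f) (g : ℝ → ℝ)
    (h : LU s a b (Te s a b f) g) (x : ℝ) (hx : x ∈ Ioo a b) :
    HasDerivAt (Vp s a b f) (g x) x := by
  refine hasDerivAt_of_tendstoLocallyUniformlyOn (l := nhdsWithin (0 : ℝ) (Ioi 0)) isOpen_Ioo
    (h.locUnif hs) (f := Ve s a b f) ?_ ?_ hx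
  · filter_upwards [self_mem_nhdsWithin] with ε hε y _
    exact Ve_hasDerivAt s a b hs f hf ε hε y
  · exact fun x hx => Ve_tendsto s a b hs hab f hf hl x hx

lemma Te_integrable (s a b : ℝ) (hs : s ∈ Ioo (0 : ℝ) 1) (f : ℝ → ℝ)
    (hf : IntegrableOn f (Ioo a b)) (ε : ℝ) (hε : 0 < ε) (x : ℝ) :
    IntegrableOn (fun y => Kr s (x - y) * f y) (Ioo a b \ Ioo (x - ε) (x + ε)) := by
  refine Integrable.bdd_mul (c := ε ^ (-(2 * s))) (hf.mono_set sdiff_subset) ?_ ?_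
  · exact ((Kr_measurable s).comp (by fun_prop : Measurable fun y => x - y)).aestronglyMeasurable
  · filter_upwards [ae_restrict_mem (measurableSet_Ioo.diff measurableSet_Ioo)] with y hy
    refine Kr_bound s ε _ hs hε ?_
    have := hy.2
    rw [mem_ball_iff] at this
    exact not_lt.1 this

lemma Te_add (s a b : ℝ) (hs : s ∈ Ioo (0 : ℝ) 1) (f g : ℝ → ℝ)
    (hf : IntegrableOn f (Ioo a b)) (hg : IntegrableOn g (Ioo a b)) (ε : ℝ) (hε : 0 < ε) (x : ℝ) :
    Te s a b (fun y => f y + g y) ε x = Te s a b f ε x + Te s a b g ε x := by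
  unfold Te
  rw [← integral_add (Te_integrable s a b hs f hf ε hε x) (Te_integrable s a b hs g hg ε hε x)]
  congr 1; ext y; ring

lemma Te_smul (s a b c : ℝ) (f : ℝ → ℝ) (ε : ℝ) (x : ℝ) :
    Te s a b (fun y => c * f y) ε x = c * Te s a b f ε x := by
  unfold Te
  rw [← integral_const_mul]
  congr 1; ext y; ring

/-- truncated weak operator -/
noncomputable def Re (s a b : ℝ) (f : ℝ → ℝ) (ε x : ℝ) : ℝ :=
  ∫ y in Ioo a b \ Ioo (x - ε) (x + ε), |x - y| ^ (1 - 2 * s) * f y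

lemma Te_mul (s a b : ℝ) (hs : s ∈ Ioo (0 : ℝ) 1) (f : ℝ → ℝ)
    (hf : IntegrableOn f (Ioo a b)) (hg : IntegrableOn (fun y => y * f y) (Ioo a b))
    (ε : ℝ) (hε : 0 < ε) (x : ℝ) :
    Te s a b (fun y => y * f y) ε x = x * Te s a b f ε x - Re s a b f ε x := by
  have h1 := Te_integrable s a b hs f hf ε hε x
  have h2 := Te_integrable s a b hs _ hg ε hε x
  have : Re s a b f ε x = x * Te s a b f ε x - Te s a b (fun y => y * f y) ε x := by
    unfold Re Te
    rw [← integral_const_mul, ← integral_sub (h1.const_mul x) h2]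
    apply setIntegral_congr_fun (measurableSet_Ioo.diff measurableSet_Ioo)
    intro y hy
    have hne : x - y ≠ 0 := by
      intro h0
      have := hy.2
      rw [mem_ball_iff, h0] at this
      simp at this; linarith
    simp only
    rw [← z_mul_Kr s _ hne]; ring
  rw [this]; ring

lemma Re_LU (s a b : ℝ) (hs : s ∈ Ioo (0 : ℝ) 1) (hab : a < b) (f : ℝ → ℝ)
    (hf : IntegrableOn f (Ioo a b)) (hl : LocBdd a b f) :
    LU s a b (Re s a b f)
      (fun x => (b - a) ^ (1 - 2 * s) * (∫ y in Ioo a b, f y) + (1 - 2 * s) * Vp s a b f x) := by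
  intro c d hc hd
  obtain ⟨M, hM0, hM⟩ := hl ((a + c) / 2) ((b + d) / 2) (by linarith) (by linarith)
  refine ⟨M * (2 / (2 - 2 * s)), ?_⟩
  have e1 : ∀ᶠ ε : ℝ in nhdsWithin 0 (Ioi 0), ε < (c - a) / 2 :=
    (nhdsWithin_le_nhds) (gt_mem_nhds (by linarith))
  have e2 : ∀ᶠ ε : ℝ in nhdsWithin 0 (Ioi 0), ε < (b - d) / 2 :=
    (nhdsWithin_le_nhds) (gt_mem_nhds (by linarith))
  filter_upwards [e1, e2, self_mem_nhdsWithin] with ε e1 e2 hε x hx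
  replace hε : 0 < ε := hε
  have hxI : x ∈ Ioo a b := ⟨by linarith [hx.1], by linarith [hx.2]⟩
  have hVi := Vp_integrable s a b hs hab f hf hl x hxI
  have heq : ∀ y, |x - y| ^ (1 - 2 * s) * f y =
      (b - a) ^ (1 - 2 * s) * f y + (1 - 2 * s) * (kk s (b - a) |x - y| * f y) := by
    intro y; rw [kk_identity s (b - a)]; ring
  have hSi : IntegrableOn (fun y => |x - y| ^ (1 - 2 * s) * f y) (Ioo a b) := by
    simp_rw [heq]
    exact (hf.const_mul _).add (hVi.const_mul _)
  have hS : ∫ y in Ioo a b, |x - y| ^ (1 - 2 * s) * f y =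
      (b - a) ^ (1 - 2 * s) * (∫ y in Ioo a b, f y) + (1 - 2 * s) * Vp s a b f x := by
    simp_rw [heq]
    unfold Vp
    rw [integral_add (hf.const_mul _) (hVi.const_mul _), integral_const_mul, integral_const_mul]
  have hsub : Ioo (x - ε) (x + ε) ⊆ Ioo a b := by
    intro y hy; exact ⟨by linarith [hy.1, hx.1], by linarith [hy.2, hx.2]⟩
  rw [← hS]
  unfold Re
  rw [setIntegral_sdiff measurableSet_Ioo hSi hsub]
  rw [sub_sub_cancel_left, abs_neg]
  obtain ⟨i3, h3⟩ := abs_rpow_ball x ε (1 - 2 * s) hε.le (by linarith [hs.2])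
  have : |∫ y in Ioo (x - ε) (x + ε), |x - y| ^ (1 - 2 * s) * f y| ≤
      ∫ y in Ioo (x - ε) (x + ε), M * |x - y| ^ (1 - 2 * s) := by
    rw [← Real.norm_eq_abs]
    apply norm_integral_le_of_norm_le (i3.const_mul M)
    filter_upwards [ae_restrict_mem measurableSet_Ioo] with y hy
    have h0 : 0 ≤ |x - y| ^ (1 - 2 * s) := Real.rpow_nonneg (abs_nonneg _) _
    rw [norm_mul, Real.norm_of_nonneg h0, Real.norm_eq_abs, mul_comm]
    gcongr
    exact hM y ⟨by linarith [hy.1, hx.1], by linarith [hy.2, hx.2]⟩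
  refine this.trans (le_of_eq ?_)
  rw [integral_const_mul, h3, show 1 - 2 * s + 1 = 2 - 2 * s by ring]
  ring

lemma LU.congr {s a b : ℝ} {F G : ℝ → ℝ → ℝ} {g h : ℝ → ℝ} (hF : LU s a b F g)
    (h1 : ∀ ε, 0 < ε → ∀ x, F ε x = G ε x) (h2 : ∀ x ∈ Ioo a b, g x = h x) :
    LU s a b G h := by
  intro c d hc hd
  obtain ⟨C, hC⟩ := hF c d hc hd
  refine ⟨C, ?_⟩
  filter_upwards [hC, self_mem_nhdsWithin] with ε hC hε x hx
  rw [← h1 ε hε x, ← h2 x ⟨by linarith [hx.1], by linarith [hx.2]⟩]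
  exact hC x hx

lemma LU.add {s a b : ℝ} {F G : ℝ → ℝ → ℝ} {g h : ℝ → ℝ} (hF : LU s a b F g)
    (hG : LU s a b G h) : LU s a b (fun ε x => F ε x + G ε x) (fun x => g x + h x) := by
  intro c d hc hd
  obtain ⟨C, hC⟩ := hF c d hc hd
  obtain ⟨C', hC'⟩ := hG c d hc hd
  refine ⟨C + C', ?_⟩
  filter_upwards [hC, hC'] with ε h1 h2 x hx
  have := h1 x hx
  have := h2 x hx
  have := abs_add_le (F ε x - g x) (G ε x - h x)
  rw [show F ε x + G ε x - (g x + h x) = (F ε x - g x) + (G ε x - h x) by ring]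
  linarith

lemma LU.mul {s a b : ℝ} {F : ℝ → ℝ → ℝ} {g : ℝ → ℝ} (hF : LU s a b F g) (m : ℝ → ℝ)
    (hm : Continuous m) : LU s a b (fun ε x => m x * F ε x) (fun x => m x * g x) := by
  intro c d hc hd
  obtain ⟨C, hC⟩ := hF c d hc hd
  obtain ⟨B, hB⟩ := isCompact_Icc.exists_bound_of_continuousOn (s := Icc c d) hm.continuousOn
  refine ⟨B * C, ?_⟩
  filter_upwards [hC] with ε h1 x hx
  have h2 := h1 x hx
  have h3 := hB x hx
  rw [Real.norm_eq_abs] at h3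
  rw [← mul_sub, abs_mul, mul_assoc]
  exact mul_le_mul h3 h2 (abs_nonneg _) ((abs_nonneg _).trans h3)

/-- the weight `ω^{s-1}` -/
noncomputable def Wt (s a b y : ℝ) : ℝ := (y - a) ^ (s - 1) * (b - y) ^ (s - 1)

noncomputable def Jf (s A B t : ℝ) : ℝ := t ^ (-(2 * s)) * ((A - t) ^ (s - 1) * (B + t) ^ (s - 1))

lemma right_sing (s e B : ℝ) (hs : s ∈ Ioo (0 : ℝ) 1) :
    IntervalIntegrable (fun t : ℝ => (B - t) ^ (s - 1)) volume e B := by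
  have h0 : IntervalIntegrable (fun t : ℝ => t ^ (s - 1)) volume 0 (B - e) :=
    intervalIntegral.intervalIntegrable_rpow' (by linarith [hs.1])
  have h1 := (h0.comp_sub_left B).symm
  rwa [sub_zero, sub_sub_cancel] at h1

lemma left_sing (s e a : ℝ) (hs : s ∈ Ioo (0 : ℝ) 1) :
    IntervalIntegrable (fun t : ℝ => (t - a) ^ (s - 1)) volume a e := by
  have h0 : IntervalIntegrable (fun t : ℝ => t ^ (s - 1)) volume 0 (e - a) :=
    intervalIntegral.intervalIntegrable_rpow' (by linarith [hs.1])
  have h1 := (h0.comp_sub_right a)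
  rwa [zero_add, sub_add_cancel] at h1

lemma Wt_integrable (s a b : ℝ) (hs : s ∈ Ioo (0 : ℝ) 1) (hab : a < b) :
    IntegrableOn (Wt s a b) (Ioo a b) := by
  have hm : a < (a + b) / 2 := by linarith
  have hm2 : (a + b) / 2 < b := by linarith
  rw [← intervalIntegrable_iff_integrableOn_Ioo_of_le hab.le]
  refine IntervalIntegrable.trans (b := (a + b) / 2) ?_ ?_
  · refine (left_sing s _ a hs).mul_continuousOn ?_
    intro y hy
    rw [uIcc_of_le hm.le] at hy
    refine ContinuousAt.continuousWithinAt (ContinuousAt.rpow_const (by fun_prop) (Or.inl ?_))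
    have := hy.2; linarith
  · refine (right_sing s _ b hs).continuousOn_mul ?_
    intro y hy
    rw [uIcc_of_le hm2.le] at hy
    refine ContinuousAt.continuousWithinAt (ContinuousAt.rpow_const (by fun_prop) (Or.inl ?_))
    have := hy.1; linarith

lemma Jf_integrable (s A B e : ℝ) (hs : s ∈ Ioo (0 : ℝ) 1) (hB : 0 < B) (he : 0 < e)
    (heA : e < A) : IntervalIntegrable (Jf s A B) volume e A := by
  refine IntervalIntegrable.continuousOn_mul ?_ ?_
  · refine (right_sing s e A hs).mul_continuousOn ?_
    intro y hy
    rw [uIcc_of_le heA.le] at hy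
    refine ContinuousAt.continuousWithinAt (ContinuousAt.rpow_const (by fun_prop) (Or.inl ?_))
    have := hy.1; linarith
  · intro y hy
    rw [uIcc_of_le heA.le] at hy
    refine ContinuousAt.continuousWithinAt (ContinuousAt.rpow_const (by fun_prop) (Or.inl ?_))
    have := hy.1; linarith

/-- the Moebius map -/
noncomputable def mob (A B t : ℝ) : ℝ := A * B * t / (A * B + (A - B) * t)

lemma mob_den (A B t : ℝ) (hA : 0 < A) (hB : 0 < B) (ht : 0 < t) (htA : t < A) :
    0 < A * B + (A - B) * t := by nlinarith [mul_pos hB (sub_pos.2 htA), mul_pos hA ht]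

lemma mob_image (A B e : ℝ) (hA : 0 < A) (hB : 0 < B) (he : 0 < e) (heA : e < A) :
    mob A B '' Ioo e A = Ioo (mob A B e) B := by
  have hqe := mob_den A B e hA hB he heA
  ext u
  constructor
  · rintro ⟨t, ht, rfl⟩
    have hq := mob_den A B t hA hB (he.trans ht.1) ht.2
    unfold mob
    constructor
    · rw [div_lt_div_iff₀ hqe hq]
      have : 0 < A * B * (A * B) * (t - e) := mul_pos (by positivity) (sub_pos.2 ht.1)
      nlinarith
    · rw [div_lt_iff₀ hq]
      have : 0 < B * B * (A - t) := mul_pos (by positivity) (sub_pos.2 ht.2)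
      nlinarith
  · rintro ⟨h1, h2⟩
    have hme : 0 < mob A B e := by unfold mob; positivity
    have hu : 0 < u := hme.trans h1
    have hp : 0 < A * B + (B - A) * u := by
      nlinarith [mul_pos hA (sub_pos.2 h2), mul_pos hB hu]
    have hme2 : A * B * e < u * (A * B + (A - B) * e) := by
      unfold mob at h1; rwa [div_lt_iff₀ hqe] at h1
    have hd : A * B + (A - B) * (A * B * u / (A * B + (B - A) * u)) =
        (A * B) * (A * B) / (A * B + (B - A) * u) := by
      generalize hpp : A * B + (B - A) * u = p at *
      field_simp; rw [← hpp]; ring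
    refine ⟨A * B * u / (A * B + (B - A) * u), ⟨?_, ?_⟩, ?_⟩
    · rw [lt_div_iff₀ hp]; nlinarith
    · rw [div_lt_iff₀ hp]
      have : 0 < A * A * (B - u) := mul_pos (by positivity) (sub_pos.2 h2)
      nlinarith
    · unfold mob
      rw [hd]
      generalize A * B + (B - A) * u = p at *
      field_simp

lemma mob_inj (A B e : ℝ) (hA : 0 < A) (hB : 0 < B) (he : 0 < e) :
    InjOn (mob A B) (Ioo e A) := by
  intro t ht u hu h
  have hq := mob_den A B t hA hB (he.trans ht.1) ht.2
  have hq' := mob_den A B u hA hB (he.trans hu.1) hu.2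
  unfold mob at h
  rw [div_eq_div_iff hq.ne' hq'.ne'] at h
  have : A * B * (A * B) * (t - u) = 0 := by linarith
  have h2 : A * B * (A * B) ≠ 0 := by positivity
  rcases mul_eq_zero.1 this with h3 | h3
  · exact absurd h3 h2
  · linarith

lemma mob_deriv (A B t : ℝ) (hq : 0 < A * B + (A - B) * t) :
    HasDerivAt (mob A B) ((A * B) ^ 2 / (A * B + (A - B) * t) ^ 2) t := by
  have h1 : HasDerivAt (fun t => A * B * t) (A * B) t := by
    simpa using (hasDerivAt_id t).const_mul (A * B)
  have h2 : HasDerivAt (fun t => A * B + (A - B) * t) (A - B) t := by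
    simpa using ((hasDerivAt_id t).const_mul (A - B)).const_add (A * B)
  refine (h1.div h2 hq.ne').congr_deriv ?_
  congr 1; ring

lemma mob_pull (s A B t : ℝ) (hA : 0 < A) (hB : 0 < B) (ht : 0 < t) (htA : t < A) :
    (A * B) ^ 2 / (A * B + (A - B) * t) ^ 2 * Jf s B A (mob A B t) = Jf s A B t := by
  have hq := mob_den A B t hA hB ht htA
  set q := A * B + (A - B) * t with hqd
  have hAt : 0 < A - t := sub_pos.2 htA
  have hBt : 0 < B + t := by linarith
  have e1 : B - mob A B t = (A - t) * (B ^ 2 / q) := by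
    unfold mob; rw [← hqd]; field_simp; rw [hqd]; ring
  have e2 : A + mob A B t = (B + t) * (A ^ 2 / q) := by
    unfold mob; rw [← hqd]; field_simp; rw [hqd]; ring
  have e3 : mob A B t = t * (A * B / q) := by
    unfold mob; rw [← hqd]; ring
  unfold Jf
  rw [e1, e2, e3]
  rw [Real.mul_rpow hAt.le (by positivity), Real.mul_rpow hBt.le (by positivity),
    Real.mul_rpow ht.le (by positivity)]
  have e4 : (B ^ 2 / q) ^ (s - 1) * (A ^ 2 / q) ^ (s - 1) = (A * B / q) ^ (2 * (s - 1)) := by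
    rw [← Real.mul_rpow (by positivity) (by positivity), Real.rpow_mul (by positivity)]
    congr 1
    rw [Real.rpow_two]; field_simp
  have e5 : (A * B) ^ 2 / q ^ 2 = (A * B / q) ^ (2 : ℝ) := by
    rw [Real.rpow_two, div_pow]
  have hR : 0 < A * B / q := by positivity
  have e6 : (A * B / q) ^ (2 : ℝ) * (A * B / q) ^ (-(2 * s)) * (A * B / q) ^ (2 * (s - 1)) = 1 := by
    rw [← Real.rpow_add hR, ← Real.rpow_add hR, show (2 : ℝ) + -(2 * s) + 2 * (s - 1) = 0 by ring,
      Real.rpow_zero]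
  rw [e5]
  calc _ = (t ^ (-(2 * s)) * ((A - t) ^ (s - 1) * (B + t) ^ (s - 1))) *
      ((A * B / q) ^ (2 : ℝ) * (A * B / q) ^ (-(2 * s)) *
        ((B ^ 2 / q) ^ (s - 1) * (A ^ 2 / q) ^ (s - 1))) := by ring
    _ = _ := by rw [e4, e6, mul_one]

lemma J_swap (s A B e : ℝ) (hA : 0 < A) (hB : 0 < B) (he : 0 < e) (heA : e < A)
    (hmB : mob A B e < B) :
    ∫ t in e..A, Jf s A B t = ∫ t in (mob A B e)..B, Jf s B A t := by
  rw [intervalIntegral.integral_of_le heA.le, intervalIntegral.integral_of_le hmB.le,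
    integral_Ioc_eq_integral_Ioo, integral_Ioc_eq_integral_Ioo, ← mob_image A B e hA hB he heA]
  rw [integral_image_eq_integral_abs_deriv_smul measurableSet_Ioo
    (fun t ht => (mob_deriv A B t (mob_den A B t hA hB (he.trans ht.1) ht.2)).hasDerivWithinAt)
    (mob_inj A B e hA hB he)]
  apply setIntegral_congr_fun measurableSet_Ioo
  intro t ht
  simp only [smul_eq_mul]
  rw [abs_of_nonneg (by positivity), mob_pull s A B t hA hB (he.trans ht.1) ht.2]

lemma Te_Wt (s a b : ℝ) (hs : s ∈ Ioo (0 : ℝ) 1) (hab : a < b) (ε x : ℝ) (hε : 0 < ε)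
    (h1 : ε < x - a) (h2 : ε < b - x) :
    Te s a b (Wt s a b) ε x =
      (∫ t in ε..(x - a), Jf s (x - a) (b - x) t) - ∫ t in ε..(b - x), Jf s (b - x) (x - a) t := by
  have hset : Ioo a b \ Ioo (x - ε) (x + ε) = Ioc a (x - ε) ∪ Ico (x + ε) b := by
    ext y
    simp only [Set.mem_sdiff, mem_Ioo, mem_union, mem_Ioc, mem_Ico]
    constructor
    · rintro ⟨⟨h3, h4⟩, h5⟩
      by_cases h : y ≤ x - ε
      · exact Or.inl ⟨h3, h⟩
      · refine Or.inr ⟨?_, h4⟩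
        by_contra h6; exact h5 ⟨not_le.1 h, not_le.1 h6⟩
    · rintro (⟨h3, h4⟩ | ⟨h3, h4⟩)
      · exact ⟨⟨h3, by linarith⟩, fun h => by linarith [h.1]⟩
      · exact ⟨⟨by linarith, h4⟩, fun h => by linarith [h.2]⟩
  have hi := Te_integrable s a b hs _ (Wt_integrable s a b hs hab) ε hε x
  rw [hset] at hi
  unfold Te
  rw [hset, setIntegral_union ?_ measurableSet_Ico (hi.mono_set subset_union_left)
    (hi.mono_set subset_union_right)]
  · rw [integral_Ico_eq_integral_Ioo, ← integral_Ioc_eq_integral_Ioo,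
      ← intervalIntegral.integral_of_le (by linarith),
      ← intervalIntegral.integral_of_le (by linarith), sub_eq_add_neg]
    congr 1
    · have := intervalIntegral.integral_comp_sub_left (a := a) (b := x - ε)
        (Jf s (x - a) (b - x)) x
      rw [sub_sub_cancel] at this
      rw [← this]
      apply intervalIntegral.integral_congr
      intro y hy
      rw [uIcc_of_le (by linarith)] at hy
      have hp : 0 < x - y := by linarith [hy.2]
      simp only [Kr, Wt, Jf]
      rw [Real.sign_of_pos hp, abs_of_pos hp, one_mul]
      congr 3 <;> ring
    · have := intervalIntegral.integral_comp_sub_right (a := x + ε) (b := b)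
        (Jf s (b - x) (x - a)) x
      rw [add_sub_cancel_left] at this
      rw [← this, ← intervalIntegral.integral_neg]
      apply intervalIntegral.integral_congr
      intro y hy
      rw [uIcc_of_le (by linarith)] at hy
      have hp : x - y < 0 := by linarith [hy.1]
      simp only [Kr, Wt, Jf]
      rw [Real.sign_of_neg hp, abs_of_neg hp, neg_sub, show b - x - (y - x) = b - y by ring,
        show x - a + (y - x) = y - a by ring]
      ring
  · rw [Set.disjoint_left]
    intro y hy hy'
    linarith [hy.2, hy'.1]

lemma Te_Wt_LU (s a b : ℝ) (hs : s ∈ Ioo (0 : ℝ) 1) (hab : a < b) :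
    LU s a b (Te s a b (Wt s a b)) (fun _ => 0) := by
  intro c d hc hd
  set η := min (c - a) (b - d) with hη
  have hη0 : 0 < η := lt_min (by linarith) (by linarith)
  refine ⟨(1 / 2) ^ (-(2 * s)) * ((η / 2) ^ (s - 1) * (η / 2) ^ (s - 1)) *
    (2 * (b - a) / η ^ 2), ?_⟩
  have e1 : ∀ᶠ ε : ℝ in nhdsWithin 0 (Ioi 0), ε < η / 4 :=
    (nhdsWithin_le_nhds) (gt_mem_nhds (by linarith))
  filter_upwards [e1, self_mem_nhdsWithin] with ε e1 hε x hx
  replace hε : 0 < ε := hε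
  have hAη : η ≤ x - a := by have := min_le_left (c - a) (b - d); linarith [hx.1]
  have hBη : η ≤ b - x := by have := min_le_right (c - a) (b - d); linarith [hx.2]
  rw [sub_zero, Te_Wt s a b hs hab ε x hε (by linarith) (by linarith)]
  have hABd : |(x - a) - (b - x)| ≤ b - a := by
    rw [abs_le]; constructor <;> linarith
  generalize hA' : x - a = A at *
  generalize hB' : b - x = B at *
  have hA : 0 < A := by linarith
  have hB : 0 < B := by linarith
  have hAB : 0 < A * B := by positivity
  have q1 : 3 / 4 * (A * B) ≤ A * B + (A - B) * ε := by nlinarith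
  have q2 : A * B + (A - B) * ε ≤ 5 / 4 * (A * B) := by nlinarith
  have hq : 0 < A * B + (A - B) * ε := by linarith
  have m1 : ε / 2 ≤ mob A B ε := by
    unfold mob; rw [le_div_iff₀ hq]; nlinarith
  have m2 : mob A B ε ≤ 2 * ε := by
    unfold mob; rw [div_le_iff₀ hq]; nlinarith
  have m3 : |ε - mob A B ε| ≤ 2 * (b - a) / η ^ 2 * ε ^ 2 := by
    have : ε - mob A B ε = ε ^ 2 * (A - B) / (A * B + (A - B) * ε) := by
      unfold mob
      generalize hpp : A * B + (A - B) * ε = p at *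
      field_simp; rw [← hpp]; ring
    rw [this, abs_div, abs_mul, abs_of_pos hq, abs_of_pos (by positivity : 0 < ε ^ 2)]
    rw [div_mul_eq_mul_div, div_le_div_iff₀ hq (by positivity)]
    have h1 : η ^ 2 ≤ A * B := by nlinarith
    have h2 : η ^ 2 ≤ 2 * (A * B + (A - B) * ε) := by linarith
    have h3 : |A - B| * η ^ 2 ≤ (b - a) * (2 * (A * B + (A - B) * ε)) :=
      mul_le_mul hABd h2 (by positivity) (by linarith)
    nlinarith [mul_le_mul_of_nonneg_left h3 (by positivity : 0 ≤ ε ^ 2)]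
  have hmB : mob A B ε < B := by linarith
  rw [J_swap s A B ε hA hB hε (by linarith) hmB]
  have i1 := Jf_integrable s B A ε hs hA hε (by linarith)
  have i2 := Jf_integrable s B A (mob A B ε) hs hA (by linarith) hmB
  have e3 : (∫ t in (mob A B ε)..B, Jf s B A t) - ∫ t in ε..B, Jf s B A t =
      ∫ t in (mob A B ε)..ε, Jf s B A t := by
    rw [← intervalIntegral.integral_add_adjacent_intervals (i2.trans i1.symm) i1]; ring
  rw [e3]
  have hb := intervalIntegral.norm_integral_le_of_norm_le_const (a := mob A B ε) (b := ε)
    (f := Jf s B A) (C := (ε / 2) ^ (-(2 * s)) * ((η / 2) ^ (s - 1) * (η / 2) ^ (s - 1))) ?_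
  · rw [Real.norm_eq_abs] at hb
    refine hb.trans ?_
    have hpow : (ε / 2) ^ (-(2 * s)) * ε ^ 2 = (1 / 2) ^ (-(2 * s)) * ε ^ (2 - 2 * s) := by
      rw [show ε / 2 = (1 / 2) * ε by ring, Real.mul_rpow (by norm_num) hε.le, mul_assoc,
        ← Real.rpow_two, ← Real.rpow_add hε]
      congr 2; ring
    calc _ ≤ (ε / 2) ^ (-(2 * s)) * ((η / 2) ^ (s - 1) * (η / 2) ^ (s - 1)) *
          (2 * (b - a) / η ^ 2 * ε ^ 2) := mul_le_mul_of_nonneg_left m3 (by positivity)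
      _ = ((ε / 2) ^ (-(2 * s)) * ε ^ 2) * ((η / 2) ^ (s - 1) * (η / 2) ^ (s - 1)) *
          (2 * (b - a) / η ^ 2) := by ring
      _ = _ := by rw [hpow]; ring
  · intro t ht
    have ht1 : ε / 2 ≤ t ∧ t ≤ 2 * ε := by
      rcases mem_uIoc.1 ht with h | h <;> constructor <;> linarith [h.1, h.2]
    have ht0 : 0 < t := by linarith [ht1.1]
    have hBt : η / 2 ≤ B - t := by linarith [ht1.2]
    have hAt : η / 2 ≤ A + t := by linarith
    have hs1 : s - 1 ≤ 0 := by linarith [hs.2]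
    unfold Jf
    rw [Real.norm_of_nonneg (mul_nonneg (Real.rpow_nonneg ht0.le _)
      (mul_nonneg (Real.rpow_nonneg (by linarith) _) (Real.rpow_nonneg (by linarith) _)))]
    have b1 := Real.rpow_le_rpow_of_nonpos (by linarith : 0 < ε / 2) ht1.1
      (by linarith [hs.1] : -(2 * s) ≤ 0)
    have b2 := Real.rpow_le_rpow_of_nonpos (by linarith : 0 < η / 2) hBt hs1
    have b3 := Real.rpow_le_rpow_of_nonpos (by linarith : 0 < η / 2) hAt hs1
    have n2 : 0 ≤ (B - t) ^ (s - 1) := Real.rpow_nonneg (by linarith) _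
    have n3 : 0 ≤ (A + t) ^ (s - 1) := Real.rpow_nonneg (by linarith) _
    have n4 : 0 ≤ (η / 2) ^ (s - 1) := Real.rpow_nonneg (by linarith) _
    exact mul_le_mul b1 (mul_le_mul b2 b3 n3 n4) (mul_nonneg n2 n3)
      (Real.rpow_nonneg (by linarith) _)

/-- polynomial times weight -/
noncomputable def fr (s a b : ℝ) (r : Polynomial ℝ) (y : ℝ) : ℝ := r.eval y * Wt s a b y

lemma poly_bdd (a b : ℝ) (r : Polynomial ℝ) : ∃ C, ∀ y ∈ Icc a b, ‖r.eval y‖ ≤ C :=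
  isCompact_Icc.exists_bound_of_continuousOn r.continuous.continuousOn

lemma fr_integrable (s a b : ℝ) (hs : s ∈ Ioo (0 : ℝ) 1) (hab : a < b) (r : Polynomial ℝ) :
    IntegrableOn (fr s a b r) (Ioo a b) := by
  obtain ⟨C, hC⟩ := poly_bdd a b r
  refine Integrable.bdd_mul (c := C) (Wt_integrable s a b hs hab)
    r.continuous.aestronglyMeasurable ?_
  filter_upwards [ae_restrict_mem measurableSet_Ioo] with y hy
  exact hC y ⟨hy.1.le, hy.2.le⟩

lemma fr_locBdd (s a b : ℝ) (r : Polynomial ℝ) : LocBdd a b (fr s a b r) := by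
  intro c d hc hd
  have hcont : ContinuousOn (fr s a b r) (Icc c d) := by
    refine r.continuous.continuousOn.mul (ContinuousOn.mul ?_ ?_)
    · refine ContinuousOn.rpow_const (by fun_prop) fun y hy => Or.inl ?_
      have := hy.1; linarith
    · refine ContinuousOn.rpow_const (by fun_prop) fun y hy => Or.inl ?_
      have := hy.2; linarith
  obtain ⟨C, hC⟩ := isCompact_Icc.exists_bound_of_continuousOn hcont
  exact ⟨max C 0, le_max_right _ _, fun y hy => (hC y hy).trans (le_max_left _ _)⟩

lemma antideriv (N : ℕ) (g : Polynomial ℝ) (hg : g.degree < N) :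
    ∃ G : Polynomial ℝ, Polynomial.derivative G = g ∧ G.natDegree ≤ N := by
  refine ⟨∑ i ∈ Finset.range N, Polynomial.monomial (i + 1) (g.coeff i / (i + 1)), ?_, ?_⟩
  · ext n
    rw [Polynomial.coeff_derivative, Polynomial.finsetSum_coeff]
    simp only [Polynomial.coeff_monomial, add_left_inj]
    rw [Finset.sum_ite_eq']
    split_ifs with h
    · field_simp
    · rw [zero_mul, Polynomial.coeff_eq_zero_of_degree_lt]
      refine hg.trans_le ?_
      simpa using h
  · apply Polynomial.natDegree_sum_le_of_forall_le
    intro i hi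
    refine (Polynomial.natDegree_monomial_le _).trans ?_
    have := Finset.mem_range.1 hi
    omega

lemma Vp_poly (s a b : ℝ) (hs : s ∈ Ioo (0 : ℝ) 1) (hab : a < b) (f : ℝ → ℝ)
    (hf : IntegrableOn f (Ioo a b)) (hl : LocBdd a b f) (N : ℕ) (g : Polynomial ℝ)
    (hg : g.degree < N) (h : LU s a b (Te s a b f) (fun x => g.eval x)) :
    ∃ G : Polynomial ℝ, G.natDegree ≤ N ∧ (∀ x ∈ Ioo a b, Vp s a b f x = G.eval x) ∧
      LU s a b (Te s a b f) (fun x => G.derivative.eval x) := by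
  obtain ⟨G, hG, hN⟩ := antideriv N g hg
  have hd : ∀ x ∈ Ioo a b, HasDerivAt (fun x => Vp s a b f x - G.eval x) 0 x := by
    intro x hx
    refine ((Vp_hasDerivAt s a b hs hab f hf hl _ h x hx).sub (G.hasDerivAt x)).congr_deriv ?_
    rw [hG, sub_self]
  obtain ⟨k, hk⟩ := isOpen_Ioo.exists_is_const_of_deriv_eq_zero isPreconnected_Ioo
    (fun x hx => (hd x hx).differentiableAt.differentiableWithinAt)
    (fun x hx => (hd x hx).deriv)
  refine ⟨G + Polynomial.C k, ?_, ?_, ?_⟩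
  · exact (Polynomial.natDegree_add_C).le.trans hN
  · intro x hx
    have := hk x hx
    simp only [Polynomial.eval_add, Polynomial.eval_C]
    linarith
  · simpa [hG] using h

lemma natDegree_X_deriv (G : Polynomial ℝ) (N : ℕ) (h : G.natDegree ≤ N) :
    (Polynomial.X * Polynomial.derivative G).natDegree ≤ N := by
  rw [Polynomial.natDegree_le_iff_coeff_eq_zero]
  intro m hm
  cases m with
  | zero => omega
  | succ m =>
    rw [Polynomial.coeff_X_mul, Polynomial.coeff_derivative,
      Polynomial.coeff_eq_zero_of_natDegree_lt (by omega), zero_mul]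

lemma main_poly (s a b : ℝ) (hs : s ∈ Ioo (0 : ℝ) 1) (hab : a < b) (N : ℕ) :
    ∀ r : Polynomial ℝ, r.natDegree ≤ N →
    ∃ G : Polynomial ℝ, G.natDegree ≤ N ∧ (∀ x ∈ Ioo a b, Vp s a b (fr s a b r) x = G.eval x) ∧
      LU s a b (Te s a b (fr s a b r)) (fun x => G.derivative.eval x) := by
  have hW := Te_Wt_LU s a b hs hab
  induction N with
  | zero =>
    intro r hr
    apply Vp_poly s a b hs hab _ (fr_integrable s a b hs hab r) (fr_locBdd s a b r) 0 0
    · simp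
    · refine (hW.mul (fun _ => r.coeff 0) continuous_const).congr ?_ ?_
      · intro ε _ x
        rw [← Te_smul]
        congr 1
        ext y
        unfold fr
        conv_rhs => rw [Polynomial.eq_C_of_natDegree_le_zero hr]
        simp
      · simp
  | succ N ih =>
    intro r hr
    obtain ⟨G1, hG1, hV, hT⟩ := ih r.divX (by
      rw [Polynomial.natDegree_divX_eq_natDegree_tsub_one]; omega)
    set k0 : ℝ := (b - a) ^ (1 - 2 * s) * ∫ y in Ioo a b, fr s a b r.divX y with hk0
    have hi1 := fr_integrable s a b hs hab r.divX
    have hR := Re_LU s a b hs hab _ hi1 (fr_locBdd s a b r.divX)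
    apply Vp_poly s a b hs hab _ (fr_integrable s a b hs hab r) (fr_locBdd s a b r) (N + 1)
      (Polynomial.X * Polynomial.derivative G1 -
        (Polynomial.C k0 + Polynomial.C (1 - 2 * s) * G1))
    · refine Polynomial.degree_le_natDegree.trans_lt ?_
      rw [Nat.cast_lt, Nat.lt_succ_iff]
      refine (Polynomial.natDegree_sub_le _ _).trans (max_le (natDegree_X_deriv G1 N hG1) ?_)
      refine (Polynomial.natDegree_add_le _ _).trans (max_le ?_ ?_)
      · simp
      · exact (Polynomial.natDegree_C_mul_le _ _).trans hG1
    · have hfe : fr s a b r = fun y => y * fr s a b r.divX y + r.coeff 0 * Wt s a b y := by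
        ext y
        unfold fr
        conv_lhs => rw [← Polynomial.divX_mul_X_add r]
        simp
        ring
      have hi2 : IntegrableOn (fun y => y * fr s a b r.divX y) (Ioo a b) := by
        refine (fr_integrable s a b hs hab (Polynomial.X * r.divX)).congr_fun ?_ measurableSet_Ioo
        intro y _
        simp [fr]
        ring
      refine (((hT.mul (fun x => x) continuous_id).add
        (hR.mul (fun _ => -1) continuous_const)).add
          (hW.mul (fun _ => r.coeff 0) continuous_const)).congr ?_ ?_
      · intro ε hε x
        rw [hfe, Te_add s a b hs _ _ hi2 ((Wt_integrable s a b hs hab).const_mul _) ε hε,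
          Te_mul s a b hs _ hi1 hi2 ε hε, Te_smul]
        ring
      · intro x hx
        rw [hV x hx]
        simp
        ring

/-- polynomial factor of the derivative -/
noncomputable def rp (s a b : ℝ) (p : Polynomial ℝ) : Polynomial ℝ :=
  (Polynomial.C (s * (a + b)) - Polynomial.C (2 * s) * Polynomial.X) * p +
    (Polynomial.X - Polynomial.C a) * (Polynomial.C b - Polynomial.X) * Polynomial.derivative p

lemma rp_natDegree (s a b : ℝ) (p : Polynomial ℝ) (n : ℕ) (h : p.natDegree ≤ n) :
    (rp s a b p).natDegree ≤ n + 1 := by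
  have h1 : ∀ c : ℝ, (Polynomial.C c * p).natDegree ≤ n :=
    fun c => (Polynomial.natDegree_C_mul_le _ _).trans h
  have h2 := natDegree_X_deriv p n h
  have h3 : (Polynomial.derivative p).natDegree ≤ n :=
    (Polynomial.natDegree_derivative_le p).trans (by omega)
  have e : rp s a b p = Polynomial.C (s * (a + b)) * p - Polynomial.X * (Polynomial.C (2 * s) * p)
      + ((Polynomial.C a + Polynomial.C b) * (Polynomial.X * Polynomial.derivative p)
      - Polynomial.X * (Polynomial.X * Polynomial.derivative p)
      - Polynomial.C (a * b) * Polynomial.derivative p) := by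
    unfold rp; simp only [Polynomial.C_mul]; ring
  have hX : ∀ t : Polynomial ℝ, t.natDegree ≤ n → (Polynomial.X * t).natDegree ≤ n + 1 := by
    intro t ht
    refine Polynomial.natDegree_mul_le.trans ?_
    have := Polynomial.natDegree_X_le (R := ℝ)
    omega
  rw [e]
  refine (Polynomial.natDegree_add_le _ _).trans (max_le ?_ ?_)
  · refine (Polynomial.natDegree_sub_le _ _).trans (max_le ?_ ?_)
    · exact (h1 _).trans (by omega)
    · exact hX _ (h1 _)
  · refine (Polynomial.natDegree_sub_le _ _).trans (max_le ?_ ?_)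
    · refine (Polynomial.natDegree_sub_le _ _).trans (max_le ?_ (hX _ h2))
      rw [← Polynomial.C_add]
      exact ((Polynomial.natDegree_C_mul_le _ _).trans h2).trans (by omega)
    · exact ((Polynomial.natDegree_C_mul_le _ _).trans h3).trans (by omega)

lemma u_hasDerivAt (s a b : ℝ) (p : Polynomial ℝ) (y : ℝ) (hy : y ∈ Ioo a b) :
    HasDerivAt (fun t => (t - a) ^ s * (b - t) ^ s * p.eval t) (fr s a b (rp s a b p) y) y := by
  have h1 : 0 < y - a := by linarith [hy.1]
  have h2 : 0 < b - y := by linarith [hy.2]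
  have d1 : HasDerivAt (fun t => (t - a) ^ s) (1 * s * (y - a) ^ (s - 1)) y :=
    ((hasDerivAt_id y).sub_const a).rpow_const (Or.inl h1.ne')
  have d2 : HasDerivAt (fun t => (b - t) ^ s) (-1 * s * (b - y) ^ (s - 1)) y :=
    ((hasDerivAt_id y).const_sub b).rpow_const (Or.inl h2.ne')
  refine ((d1.mul d2).mul (p.hasDerivAt y)).congr_deriv ?_
  have e1 : (y - a) ^ s = (y - a) ^ (s - 1) * (y - a) := by
    rw [← Real.rpow_add_one h1.ne']; congr 1; ring
  have e2 : (b - y) ^ s = (b - y) ^ (s - 1) * (b - y) := by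
    rw [← Real.rpow_add_one h2.ne']; congr 1; ring
  simp only [Pi.mul_apply]
  rw [e1, e2]
  unfold fr Wt rp
  simp only [Polynomial.eval_add, Polynomial.eval_mul, Polynomial.eval_sub, Polynomial.eval_C,
    Polynomial.eval_X]
  ring

lemma WFL_of (s a b : ℝ) (hs : s ∈ Ioo (0 : ℝ) 1) (p G : Polynomial ℝ)
    (h : LU s a b (Te s a b (fr s a b (rp s a b p))) (fun x => G.derivative.eval x))
    (x : ℝ) (hx : x ∈ Ioo a b) :
    WFL s a b (fun t => p.eval t) x (C1 s / (2 * s) * G.derivative.eval x) := by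
  have ht := (h.tendsto hs x hx).const_mul (C1 s / (2 * s))
  unfold WFL
  refine ht.congr fun ε => ?_
  unfold Te
  congr 1
  apply setIntegral_congr_fun (measurableSet_Ioo.diff measurableSet_Ioo)
  intro y hy
  simp only
  rw [(u_hasDerivAt s a b p y hy.1).deriv]
  rfl

lemma prod_integrable (s a b : ℝ) (hs : s ∈ Ioo (0 : ℝ) 1) (hab : a < b) (r1 r2 : Polynomial ℝ) :
    Integrable (Function.uncurry fun x y =>
      (kk s (b - a) |x - y| * fr s a b r1 y) * fr s a b r2 x)
      ((volume.restrict (Ioo a b)).prod (volume.restrict (Ioo a b))) := by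
  have hWi := Wt_integrable s a b hs hab
  have hfr1 : fr s a b 1 = Wt s a b := by ext y; simp [fr]
  have hl := fr_locBdd s a b 1
  rw [hfr1] at hl
  have hVi := Vp_integrable s a b hs hab _ hWi hl
  obtain ⟨G, hG, hV, -⟩ := main_poly s a b hs hab 0 1 (by simp)
  rw [hfr1] at hV
  have hWm : Measurable (Wt s a b) := by unfold Wt; fun_prop
  have hbase : Integrable (fun z : ℝ × ℝ =>
      (kk s (b - a) |z.1 - z.2| * Wt s a b z.2) * Wt s a b z.1)
      ((volume.restrict (Ioo a b)).prod (volume.restrict (Ioo a b))) := by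
    rw [integrable_prod_iff]
    · constructor
      · filter_upwards [ae_restrict_mem measurableSet_Ioo] with x hx
        exact (hVi x hx).mul_const _
      · refine (fr_integrable s a b hs hab (-G)).congr ?_
        filter_upwards [ae_restrict_mem measurableSet_Ioo] with x hx
        have hWx : 0 ≤ Wt s a b x := mul_nonneg (Real.rpow_nonneg (by linarith [hx.1]) _)
          (Real.rpow_nonneg (by linarith [hx.2]) _)
        have : ∫ y in Ioo a b, ‖(kk s (b - a) |x - y| * Wt s a b y) * Wt s a b x‖ =
            ∫ y in Ioo a b, -(kk s (b - a) |x - y| * Wt s a b y) * Wt s a b x := by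
          apply integral_congr_ae
          filter_upwards [ae_ne x (Ioo a b), ae_restrict_mem measurableSet_Ioo] with y hy hy2
          have hWy : 0 ≤ Wt s a b y := mul_nonneg (Real.rpow_nonneg (by linarith [hy2.1]) _)
            (Real.rpow_nonneg (by linarith [hy2.2]) _)
          have hk := kk_nonpos s (b - a) |x - y| (abs_pos.2 (sub_ne_zero.2 hy.symm))
            (dist_lt_of_mem hx hy2).le
          rw [norm_mul, norm_mul, Real.norm_of_nonneg hWx, Real.norm_of_nonneg hWy,
            Real.norm_of_nonpos hk]
          ring
        rw [this, integral_mul_const, integral_neg]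
        have hv := hV x hx
        unfold Vp at hv
        rw [hv]
        simp [fr]
    · have hm := kk_measurable s (b - a)
      apply Measurable.aestronglyMeasurable
      exact ((hm.comp (by fun_prop : Measurable fun z : ℝ × ℝ => |z.1 - z.2|)).mul
        (hWm.comp measurable_snd)).mul (hWm.comp measurable_fst)
  obtain ⟨C, hC⟩ := poly_bdd a b r1
  obtain ⟨C', hC'⟩ := poly_bdd a b r2
  have := hbase.bdd_mul (c := C * C') (f := fun z : ℝ × ℝ => r1.eval z.2 * r2.eval z.1) ?_ ?_
  · refine this.congr (Eventually.of_forall fun z => ?_)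
    simp only [Function.uncurry, fr]
    ring
  · exact ((r1.continuous.comp continuous_snd).mul
      (r2.continuous.comp continuous_fst)).aestronglyMeasurable
  · rw [Measure.prod_restrict]
    filter_upwards [ae_restrict_mem (measurableSet_Ioo.prod measurableSet_Ioo)] with z hz
    rw [norm_mul]
    have h1 := hC z.2 ⟨hz.2.1.le, hz.2.2.le⟩
    have h2 := hC' z.1 ⟨hz.1.1.le, hz.1.2.le⟩
    exact mul_le_mul h1 h2 (norm_nonneg _) ((norm_nonneg _).trans h1)

lemma bilin_symm (s a b : ℝ) (hs : s ∈ Ioo (0 : ℝ) 1) (hab : a < b) (r1 r2 G1 G2 : Polynomial ℝ)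
    (h1 : ∀ x ∈ Ioo a b, Vp s a b (fr s a b r1) x = G1.eval x)
    (h2 : ∀ x ∈ Ioo a b, Vp s a b (fr s a b r2) x = G2.eval x) :
    ∫ x in Ioo a b, G1.eval x * fr s a b r2 x = ∫ x in Ioo a b, G2.eval x * fr s a b r1 x := by
  have e1 : ∫ x in Ioo a b, G1.eval x * fr s a b r2 x =
      ∫ x in Ioo a b, ∫ y in Ioo a b,
        (kk s (b - a) |x - y| * fr s a b r1 y) * fr s a b r2 x := by
    apply setIntegral_congr_fun measurableSet_Ioo
    intro x hx
    simp only
    rw [integral_mul_const, ← h1 x hx]; rfl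
  have e2 : ∫ x in Ioo a b, G2.eval x * fr s a b r1 x =
      ∫ y in Ioo a b, ∫ x in Ioo a b,
        (kk s (b - a) |x - y| * fr s a b r1 y) * fr s a b r2 x := by
    apply setIntegral_congr_fun measurableSet_Ioo
    intro x hx
    simp only
    rw [← h2 x hx]
    unfold Vp
    rw [← integral_mul_const]
    congr 1; ext y
    rw [abs_sub_comm]; ring
  rw [e1, e2]
  exact integral_integral_swap (prod_integrable s a b hs hab r1 r2)

lemma by_parts (s a b : ℝ) (hs : s ∈ Ioo (0 : ℝ) 1) (hab : a < b) (q G : Polynomial ℝ) :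
    ∫ x in Ioo a b, G.derivative.eval x * q.eval x * ((x - a) ^ s * (b - x) ^ s) =
      - ∫ x in Ioo a b, G.eval x * fr s a b (rp s a b q) x := by
  have hcont : Continuous (fun t : ℝ => (t - a) ^ s * (b - t) ^ s * q.eval t) := by
    refine Continuous.mul (Continuous.mul ?_ ?_) q.continuous
    · exact (Continuous.rpow_const (by fun_prop) fun _ => Or.inr hs.1.le)
    · exact (Continuous.rpow_const (by fun_prop) fun _ => Or.inr hs.1.le)
  have i1 : IntegrableOn (fun x => G.derivative.eval x * ((x - a) ^ s * (b - x) ^ s * q.eval x))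
      (Ioo a b) :=
    ((G.derivative.continuous.mul hcont).integrableOn_Icc).mono_set Ioo_subset_Icc_self
  have i2 : IntegrableOn (fun x => G.eval x * fr s a b (rp s a b q) x) (Ioo a b) := by
    refine (fr_integrable s a b hs hab (G * rp s a b q)).congr_fun ?_ measurableSet_Ioo
    intro y _
    simp [fr]
    ring
  have i3 := i1.add i2
  have ftc := intervalIntegral.integral_eq_sub_of_hasDerivAt_of_le hab.le
    (f := fun x => G.eval x * ((x - a) ^ s * (b - x) ^ s * q.eval x))
    (f' := fun x => G.derivative.eval x * ((x - a) ^ s * (b - x) ^ s * q.eval x) +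
      G.eval x * fr s a b (rp s a b q) x)
    (G.continuous.mul hcont).continuousOn
    (fun x hx => (G.hasDerivAt x).mul (u_hasDerivAt s a b q x hx))
    ((intervalIntegrable_iff_integrableOn_Ioo_of_le hab.le).2 i3)
  rw [intervalIntegral.integral_of_le hab.le, integral_Ioc_eq_integral_Ioo,
    integral_add i1 i2] at ftc
  simp only [sub_self, Real.zero_rpow hs.1.ne', zero_mul, mul_zero] at ftc
  have e : ∫ x in Ioo a b, G.derivative.eval x * q.eval x * ((x - a) ^ s * (b - x) ^ s) =
      ∫ x in Ioo a b, G.derivative.eval x * ((x - a) ^ s * (b - x) ^ s * q.eval x) := by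
    congr 1; ext x; ring
  rw [e]; linarith



theorem stmt10 (s a b : ℝ) (hs : s ∈ Set.Ioo (0 : ℝ) 1) (hab : a < b) (n : ℕ) :
    (∀ p : Polynomial ℝ, p.natDegree ≤ n →
      ∃ q : Polynomial ℝ, q.natDegree ≤ n ∧
        ∀ x ∈ Set.Ioo a b, WFL s a b (fun t => p.eval t) x (q.eval x)) ∧
    (∀ p q : Polynomial ℝ, p.natDegree ≤ n → q.natDegree ≤ n →
      ∀ P Q : ℝ → ℝ,
        (∀ x ∈ Set.Ioo a b, WFL s a b (fun t => p.eval t) x (P x)) →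
        (∀ x ∈ Set.Ioo a b, WFL s a b (fun t => q.eval t) x (Q x)) →
        ∫ x in Set.Ioo a b, P x * q.eval x * ((x - a) ^ s * (b - x) ^ s) =
          ∫ x in Set.Ioo a b, p.eval x * Q x * ((x - a) ^ s * (b - x) ^ s)) := by

  have key : ∀ p : Polynomial ℝ, p.natDegree ≤ n → ∃ G : Polynomial ℝ, G.natDegree ≤ n + 1 ∧
      (∀ x ∈ Ioo a b, Vp s a b (fr s a b (rp s a b p)) x = G.eval x) ∧
      ∀ x ∈ Ioo a b, WFL s a b (fun t => p.eval t) x (C1 s / (2 * s) * G.derivative.eval x) := by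
    intro p hp
    obtain ⟨G, hG, hV, hT⟩ := main_poly s a b hs hab (n + 1) (rp s a b p)
      (rp_natDegree s a b p n hp)
    exact ⟨G, hG, hV, fun x hx => WFL_of s a b hs p G hT x hx⟩
  constructor
  · intro p hp
    obtain ⟨G, hG, -, hT⟩ := key p hp
    refine ⟨Polynomial.C (C1 s / (2 * s)) * Polynomial.derivative G, ?_, ?_⟩
    · refine (Polynomial.natDegree_C_mul_le _ _).trans ?_
      exact (Polynomial.natDegree_derivative_le G).trans (by omega)
    · intro x hx
      simpa using hT x hx
  · intro p q hp hq P Q hP hQ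
    obtain ⟨G1, -, hV1, hT1⟩ := key p hp
    obtain ⟨G2, -, hV2, hT2⟩ := key q hq
    have hP' : ∀ x ∈ Ioo a b, P x = C1 s / (2 * s) * G1.derivative.eval x :=
      fun x hx => tendsto_nhds_unique (hP x hx) (hT1 x hx)
    have hQ' : ∀ x ∈ Ioo a b, Q x = C1 s / (2 * s) * G2.derivative.eval x :=
      fun x hx => tendsto_nhds_unique (hQ x hx) (hT2 x hx)
    have e1 : ∫ x in Set.Ioo a b, P x * q.eval x * ((x - a) ^ s * (b - x) ^ s) =
        C1 s / (2 * s) *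
          ∫ x in Ioo a b, G1.derivative.eval x * q.eval x * ((x - a) ^ s * (b - x) ^ s) := by
      rw [← integral_const_mul]
      apply setIntegral_congr_fun measurableSet_Ioo
      intro x hx
      simp only
      rw [hP' x hx]; ring
    have e2 : ∫ x in Set.Ioo a b, p.eval x * Q x * ((x - a) ^ s * (b - x) ^ s) =
        C1 s / (2 * s) *
          ∫ x in Ioo a b, G2.derivative.eval x * p.eval x * ((x - a) ^ s * (b - x) ^ s) := by
      rw [← integral_const_mul]
      apply setIntegral_congr_fun measurableSet_Ioo
      intro x hx
      simp only
      rw [hQ' x hx]; ring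
    rw [e1, e2, by_parts s a b hs hab q G1, by_parts s a b hs hab p G2,
      bilin_symm s a b hs hab _ _ G1 G2 hV1 hV2]
end

section
/- Let s ∈ (0,1) and n ∈ ℕ∪{0}, and set p_n(x) = C_n^{(s+1/2)}(2x−1). Then for the weighted fractional Laplacian on the interval (0,1), for every x ∈ (0,1), (−Δ)^s_ω p_n(x) = (Γ(2s+n+1)/n!) · p_n(x). -/
open MeasureTheory Filter Set

/-- The Gegenbauer polynomials `C_n^{(λ)}`, defined by their three-term recurrence. -/
noncomputable def gegen (l : ℝ) : ℕ → ℝ → ℝ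
  | 0, _ => 1
  | 1, x => 2 * l * x
  | (n + 2), x =>
      (2 * x * ((n : ℝ) + 2 + l - 1) * gegen l (n + 1) x
        - ((n : ℝ) + 2 + 2 * l - 2) * gegen l n x) / ((n : ℝ) + 2)

noncomputable def dgegen (l : ℝ) : ℕ → ℝ → ℝ
  | 0, _ => 0
  | 1, _ => 2 * l
  | (n + 2), x =>
      (2 * ((n : ℝ) + 2 + l - 1) * gegen l (n + 1) x
        + 2 * x * ((n : ℝ) + 2 + l - 1) * dgegen l (n + 1) x
        - ((n : ℝ) + 2 + 2 * l - 2) * dgegen l n x) / ((n : ℝ) + 2)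

lemma gegen_rec (l : ℝ) (n : ℕ) (x : ℝ) : ((n : ℝ) + 2) * gegen l (n + 2) x =
    2 * x * ((n : ℝ) + 1 + l) * gegen l (n + 1) x - ((n : ℝ) + 2 * l) * gegen l n x := by
  rw [gegen]
  have : (n : ℝ) + 2 ≠ 0 := by positivity
  field_simp
  ring

lemma dgegen_rec (l : ℝ) (n : ℕ) (x : ℝ) : ((n : ℝ) + 2) * dgegen l (n + 2) x =
    2 * ((n : ℝ) + 1 + l) * gegen l (n + 1) x +
    2 * x * ((n : ℝ) + 1 + l) * dgegen l (n + 1) x - ((n : ℝ) + 2 * l) * dgegen l n x := by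
  rw [dgegen]
  have : (n : ℝ) + 2 ≠ 0 := by positivity
  field_simp
  ring

lemma hasDerivAt_gegen (l : ℝ) (n : ℕ) (x : ℝ) : HasDerivAt (gegen l n) (dgegen l n x) x := by
  induction n using Nat.strong_induction_on with
  | _ n ih =>
    match n, ih with
    | 0, _ =>
      have : gegen l 0 = fun _ => 1 := by funext y; simp [gegen]
      rw [this]; simpa [dgegen] using hasDerivAt_const x (1 : ℝ)
    | 1, _ =>
      have : gegen l 1 = fun y => 2 * l * y := by funext y; simp [gegen]
      rw [this]; simpa [dgegen] using (hasDerivAt_id x).const_mul (2 * l)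
    | (n + 2), ih =>
      have h1 := ih (n + 1) (by omega)
      have h0 := ih n (by omega)
      have : gegen l (n + 2) = fun y => (2 * y * ((n : ℝ) + 2 + l - 1) * gegen l (n + 1) y
        - ((n : ℝ) + 2 + 2 * l - 2) * gegen l n y) / ((n : ℝ) + 2) := by funext y; rw [gegen]
      rw [this]
      have := (((((hasDerivAt_id x).const_mul 2).mul_const ((n : ℝ) + 2 + l - 1)).mul h1).sub
        (h0.const_mul ((n : ℝ) + 2 + 2 * l - 2))).div_const ((n : ℝ) + 2)
      convert! this using 1
      rw [dgegen]; simp only [id]; ring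

lemma continuous_gegen (l : ℝ) (n : ℕ) : Continuous (gegen l n) :=
  continuous_iff_continuousAt.2 fun x => (hasDerivAt_gegen l n x).continuousAt

lemma continuous_dgegen (l : ℝ) (n : ℕ) : Continuous (dgegen l n) := by
  induction n using Nat.strong_induction_on with
  | _ n ih =>
    match n, ih with
    | 0, _ =>
      have : dgegen l 0 = fun _ => 0 := by funext y; simp [dgegen]
      rw [this]; fun_prop
    | 1, _ =>
      have : dgegen l 1 = fun y => 2 * l := by funext y; simp [dgegen]
      rw [this]; fun_prop
    | (n + 2), ih =>
      have h1 := ih (n + 1) (by omega)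
      have h0 := ih n (by omega)
      have h2 := continuous_gegen l (n + 1)
      have : dgegen l (n + 2) = fun x => (2 * ((n : ℝ) + 2 + l - 1) * gegen l (n + 1) x
        + 2 * x * ((n : ℝ) + 2 + l - 1) * dgegen l (n + 1) x
        - ((n : ℝ) + 2 + 2 * l - 2) * dgegen l n x) / ((n : ℝ) + 2) := by funext y; rw [dgegen]
      rw [this]; fun_prop

lemma gegen_A (l : ℝ) (n : ℕ) (x : ℝ) :
    (1 - x ^ 2) * dgegen l n x = (n + 2 * l) * x * gegen l n x - (n + 1) * gegen l (n + 1) x ∧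
    (1 - x ^ 2) * dgegen l (n + 1) x =
      (n + 2 * l) * gegen l n x - (n + 1) * x * gegen l (n + 1) x := by
  induction n with
  | zero => simp [gegen, dgegen]; ring
  | succ n ih =>
    obtain ⟨hA, hB⟩ := ih
    have h1 := gegen_rec l n x
    have h2 := dgegen_rec l n x
    have hn : (n : ℝ) + 2 ≠ 0 := by positivity
    constructor
    · push_cast
      have e : ((n : ℝ) + 1 + 1) * gegen l (n + 1 + 1) x = (n + 2) * gegen l (n + 2) x := by ring_nf
      rw [e, h1, hB]; ring
    · push_cast
      apply mul_left_cancel₀ hn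
      show ((n : ℝ) + 2) * ((1 - x ^ 2) * dgegen l (n + 2) x) = ((n : ℝ) + 2) *
        (((n : ℝ) + 1 + 2 * l) * gegen l (n + 1) x - ((n : ℝ) + 1 + 1) * x * gegen l (n + 2) x)
      linear_combination (1 - x ^ 2) * h2 + 2 * x * (n + 1 + l) * hB - (n + 2 * l) * hA
        + (n + 2) * x * h1

lemma beta_intervalIntegrable {a b : ℝ} (ha : 0 < a) (hb : 0 < b) :
    IntervalIntegrable (fun r : ℝ => r ^ (a - 1) * (1 - r) ^ (b - 1)) volume 0 1 := by
  have h := Complex.betaIntegral_convergent (u := a) (v := b) (by simpa) (by simpa)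
  rw [intervalIntegrable_iff_integrableOn_Ioc_of_le (by simp)] at h ⊢
  have h' := h.re
  refine IntegrableOn.congr_fun h' ?_ measurableSet_Ioc
  intro x hx
  have h1 := hx.1
  have h2 : 0 ≤ 1 - x := by linarith [hx.2]
  have e1 : ((x : ℂ) ^ ((a : ℂ) - 1)) = ((x ^ (a - 1) : ℝ) : ℂ) := by
    rw [Complex.ofReal_cpow h1.le]; push_cast; rfl
  have e2 : ((1 - (x : ℂ)) ^ ((b : ℂ) - 1)) = (((1 - x) ^ (b - 1) : ℝ) : ℂ) := by
    rw [Complex.ofReal_cpow h2]; push_cast; rfl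
  simp only [e1, e2, ← Complex.ofReal_mul]
  exact Complex.ofReal_re _

lemma beta_integral {a b : ℝ} (ha : 0 < a) (hb : 0 < b) :
    ∫ r in (0:ℝ)..1, r ^ (a - 1) * (1 - r) ^ (b - 1) =
      Real.Gamma a * Real.Gamma b / Real.Gamma (a + b) := by
  have h := ProbabilityTheory.beta_eq_betaIntegralReal a b ha hb
  have e : Complex.betaIntegral a b =
      ((∫ r in (0:ℝ)..1, r ^ (a - 1) * (1 - r) ^ (b - 1) : ℝ) : ℂ) := by
    rw [Complex.betaIntegral, ← intervalIntegral.integral_ofReal]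
    apply intervalIntegral.integral_congr
    intro x hx
    rw [uIcc_of_le (by norm_num)] at hx
    have h1 := hx.1
    have h2 : 0 ≤ 1 - x := by linarith [hx.2]
    simp only
    rw [Complex.ofReal_mul, Complex.ofReal_cpow h1, Complex.ofReal_cpow h2]; push_cast; rfl
  rw [e, Complex.ofReal_re] at h
  rw [← h, ProbabilityTheory.beta]

/-- kernel, weight, truncated set -/
noncomputable def kr (s x y : ℝ) : ℝ := Real.sign (x - y) * |x - y| ^ (-(2 * s))
noncomputable def wt (s y : ℝ) : ℝ := y ^ (s - 1) * (1 - y) ^ (s - 1)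
def SS (x ε : ℝ) : Set ℝ := Set.Ioo 0 1 \ Set.Ioo (x - ε) (x + ε)
noncomputable def EE (s x ε : ℝ) (q : ℝ → ℝ) : ℝ := ∫ y in SS x ε, kr s x y * (wt s y * q y)

lemma measurableSet_SS (x ε : ℝ) : MeasurableSet (SS x ε) := measurableSet_Ioo.diff measurableSet_Ioo

lemma ker_lt {s x y : ℝ} (h : y < x) : kr s x y = (x - y) ^ (-(2 * s)) := by
  rw [kr, Real.sign_of_pos (by linarith), abs_of_pos (by linarith), one_mul]

lemma ker_gt {s x y : ℝ} (h : x < y) : kr s x y = - (y - x) ^ (-(2 * s)) := by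
  rw [kr, Real.sign_of_neg (by linarith), abs_of_neg (by linarith)]; ring_nf

lemma wtq_int {s : ℝ} (hs : 0 < s) {q : ℝ → ℝ} (hq : Continuous q) :
    IntervalIntegrable (fun y => wt s y * q y) volume 0 1 :=
  (beta_intervalIntegrable hs hs).mul_continuousOn hq.continuousOn

lemma measurable_ker (s x : ℝ) : Measurable (kr s x) := by
  have : Measurable Real.sign := by
    unfold Real.sign
    exact Measurable.ite measurableSet_Iio measurable_const
      (Measurable.ite measurableSet_Ioi measurable_const measurable_const)
  unfold kr
  exact (this.comp (by fun_prop)).mul (by fun_prop)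

lemma EE_int {s x ε : ℝ} (hs : 0 < s) (hε : 0 < ε) {q : ℝ → ℝ} (hq : Continuous q) :
    IntegrableOn (fun y => kr s x y * (wt s y * q y)) (SS x ε) := by
  have h1 := wtq_int hs hq
  rw [intervalIntegrable_iff_integrableOn_Ioo_of_le (by simp)] at h1
  have h2 : IntegrableOn (fun y => wt s y * q y) (SS x ε) := h1.mono_set sdiff_subset
  refine Integrable.bdd_mul (c := ε ^ (-(2 * s))) h2 (measurable_ker s x).aestronglyMeasurable ?_
  refine ae_restrict_of_forall_mem (measurableSet_SS x ε) fun y hy => ?_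
  have h3 : ε ≤ |x - y| := by
    by_contra hc
    push Not at hc
    rw [abs_lt] at hc
    exact hy.2 ⟨by linarith, by linarith⟩
  have h4 : |x - y| ^ (-(2 * s)) ≤ ε ^ (-(2 * s)) :=
    Real.rpow_le_rpow_of_nonpos hε h3 (by linarith)
  rw [kr, norm_mul, Real.norm_of_nonneg (Real.rpow_nonneg (abs_nonneg _) _)]
  have h5 : ‖Real.sign (x - y)‖ ≤ 1 := by
    rcases Real.sign_apply_eq (x - y) with h | h | h <;> simp [h]
  calc _ ≤ 1 * |x - y| ^ (-(2 * s)) := by gcongr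
    _ ≤ _ := by simpa using h4

lemma SS_eq {x ε : ℝ} (hε : 0 < ε) (h0 : ε < x) (h1 : ε < 1 - x) :
    SS x ε = Ioc 0 (x - ε) ∪ Ico (x + ε) 1 := by
  ext y
  simp only [SS, Set.mem_sdiff, mem_Ioo, mem_union, mem_Ioc, mem_Ico, not_and, not_lt]
  constructor
  · rintro ⟨⟨a, b⟩, c⟩
    rcases le_or_gt y (x - ε) with h | h
    · left; exact ⟨a, h⟩
    · right; exact ⟨c h, b⟩
  · rintro (⟨a, b⟩ | ⟨a, b⟩)
    · exact ⟨⟨a, by linarith⟩, fun h => by linarith⟩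
    · exact ⟨⟨by linarith, b⟩, fun h => a⟩

lemma EE_split {s x ε : ℝ} (hs : 0 < s) (hε : 0 < ε) (h0 : ε < x) (h1 : ε < 1 - x) {q : ℝ → ℝ}
    (hq : Continuous q) :
    IntervalIntegrable (fun y => (x - y) ^ (-(2 * s)) * (wt s y * q y)) volume 0 (x - ε) ∧
    IntervalIntegrable (fun y => (y - x) ^ (-(2 * s)) * (wt s y * q y)) volume (x + ε) 1 ∧
    EE s x ε q = (∫ y in (0:ℝ)..(x - ε), (x - y) ^ (-(2 * s)) * (wt s y * q y)) -
      ∫ y in (x + ε)..1, (y - x) ^ (-(2 * s)) * (wt s y * q y) := by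
  have hi := EE_int (x := x) hs hε hq
  have hE : EE s x ε q = ∫ y in SS x ε, kr s x y * (wt s y * q y) := rfl
  rw [SS_eq hε h0 h1] at hi hE
  have hL := hi.mono_set (subset_union_left)
  have hR := hi.mono_set (subset_union_right)
  rw [setIntegral_union _ measurableSet_Ico hL hR] at hE
  · have eL : EqOn (fun y => kr s x y * (wt s y * q y))
        (fun y => (x - y) ^ (-(2 * s)) * (wt s y * q y)) (Ioc 0 (x - ε)) := by
      intro y hy; simp only; rw [ker_lt (by linarith [hy.2])]
    have eR : EqOn (fun y => kr s x y * (wt s y * q y))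
        (fun y => -((y - x) ^ (-(2 * s)) * (wt s y * q y))) (Ico (x + ε) 1) := by
      intro y hy; simp only; rw [ker_gt (by linarith [hy.1])]; ring
    refine ⟨?_, ?_, ?_⟩
    · rw [intervalIntegrable_iff_integrableOn_Ioc_of_le (by linarith)]
      exact hL.congr_fun eL measurableSet_Ioc
    · rw [intervalIntegrable_iff_integrableOn_Ico_of_le (by linarith)]
      have := (hR.congr_fun eR measurableSet_Ico).neg
      refine this.congr_fun ?_ measurableSet_Ico
      intro y _; simp
    · rw [hE, setIntegral_congr_fun measurableSet_Ioc eL, setIntegral_congr_fun measurableSet_Ico eR,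
        integral_neg, intervalIntegral.integral_of_le (by linarith),
        intervalIntegral.integral_of_le (by linarith), integral_Ico_eq_integral_Ioo,
        integral_Ioc_eq_integral_Ioo, integral_Ioc_eq_integral_Ioo]
      ring
  · rw [Set.disjoint_left]
    intro y h2 h3
    linarith [h2.2, h3.1]

lemma hasDerivAt_w {s y : ℝ} (h0 : 0 < y) (h1 : y < 1) {φ : ℝ → ℝ} {d : ℝ} (hφ : HasDerivAt φ d y) :
    HasDerivAt (fun t => t ^ s * (1 - t) ^ s * φ t)
      (wt s y * (y * (1 - y) * d + s * (1 - 2 * y) * φ y)) y := by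
  have a1 : HasDerivAt (fun t : ℝ => t ^ s) (s * y ^ (s - 1)) y :=
    Real.hasDerivAt_rpow_const (Or.inl h0.ne')
  have a2 : HasDerivAt (fun t : ℝ => (1 - t) ^ s) (-1 * s * (1 - y) ^ (s - 1)) y :=
    ((hasDerivAt_id y).const_sub 1).rpow_const (Or.inl (by simp; linarith))
  convert! (a1.mul a2).mul hφ using 1
  have e1 : y ^ s = y ^ (s - 1) * y := by
    rw [← Real.rpow_add_one h0.ne']; ring_nf
  have e2 : (1 - y) ^ s = (1 - y) ^ (s - 1) * (1 - y) := by
    rw [← Real.rpow_add_one (by linarith : (1:ℝ) - y ≠ 0)]; ring_nf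
  simp only [Pi.mul_apply, e1, e2, wt]; ring

lemma IBP_tendsto {s x : ℝ} (hs : s ∈ Ioo (0:ℝ) 1) (hx : x ∈ Ioo (0:ℝ) 1) {φ dφ : ℝ → ℝ}
    (hφ : ∀ y, HasDerivAt φ (dφ y) y) (hd : Continuous dφ) :
    Tendsto (fun ε => EE s x ε (fun y => (x - y) * (y * (1 - y) * dφ y + s * (1 - 2 * y) * φ y)
      - (1 - 2 * s) * (y * (1 - y) * φ y))) (nhdsWithin 0 (Ioi 0)) (nhds 0) := by
  obtain ⟨hs0, hs1⟩ := hs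
  obtain ⟨hx0, hx1⟩ := hx
  have hφc : Continuous φ := continuous_iff_continuousAt.2 fun y => (hφ y).continuousAt
  set q : ℝ → ℝ := (fun y => (x - y) * (y * (1 - y) * dφ y + s * (1 - 2 * y) * φ y)
      - (1 - 2 * s) * (y * (1 - y) * φ y)) with hq
  have hqc : Continuous q := by fun_prop
  set u : ℝ → ℝ := fun t => t ^ s * (1 - t) ^ s * φ t with hu
  have huc : Continuous u := by
    have := Real.continuous_rpow_const hs0.le
    exact (this.mul (this.comp (by fun_prop : Continuous fun t : ℝ => 1 - t))).mul hφc
  have hev : ∀ᶠ ε in nhdsWithin (0:ℝ) (Ioi 0), 0 < ε ∧ ε < x ∧ ε < 1 - x := by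
    filter_upwards [self_mem_nhdsWithin, nhdsWithin_le_nhds (Iio_mem_nhds hx0),
      nhdsWithin_le_nhds (Iio_mem_nhds (by linarith : 0 < 1 - x))] with ε a b c
    exact ⟨a, b, c⟩
  have key : ∀ ε, 0 < ε → ε < x → ε < 1 - x →
      EE s x ε q = ε ^ (1 - 2 * s) * (u (x - ε) - u (x + ε)) := by
    intro ε h0 h1 h2
    obtain ⟨iL, iR, hE⟩ := EE_split (x := x) hs0 h0 h1 h2 hqc
    rw [hE]
    have L : (∫ y in (0:ℝ)..(x - ε), (x - y) ^ (-(2 * s)) * (wt s y * q y)) =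
        (x - (x - ε)) ^ (1 - 2 * s) * u (x - ε) - (x - 0) ^ (1 - 2 * s) * u 0 := by
      apply intervalIntegral.integral_eq_sub_of_hasDerivAt_of_le
        (f := fun y => (x - y) ^ (1 - 2 * s) * u y) (by linarith) _ _ iL
      · refine ContinuousOn.mul ?_ huc.continuousOn
        refine ContinuousOn.rpow_const (by fun_prop) fun y hy => Or.inl ?_
        have := hy.2
        exact ne_of_gt (by linarith)
      · intro y hy
        have hy1 : 0 < x - y := by linarith [hy.2]
        have a1 : HasDerivAt (fun t : ℝ => (x - t) ^ (1 - 2 * s))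
            (-1 * (1 - 2 * s) * (x - y) ^ (1 - 2 * s - 1)) y :=
          ((hasDerivAt_id y).const_sub x).rpow_const (Or.inl (by simp; linarith))
        convert! a1.mul (hasDerivAt_w (s := s) hy.1 (by linarith [hy.2]) (hφ y)) using 1
        have e1 : y ^ s = y ^ (s - 1) * y := by
          rw [← Real.rpow_add_one hy.1.ne']; ring_nf
        have e2 : (1 - y) ^ s = (1 - y) ^ (s - 1) * (1 - y) := by
          rw [← Real.rpow_add_one (by linarith : (1:ℝ) - y ≠ 0)]; ring_nf
        have e3 : (x - y) ^ (1 - 2 * s) = (x - y) ^ (-(2 * s)) * (x - y) := by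
          rw [← Real.rpow_add_one hy1.ne']; ring_nf
        have e4 : (x - y) ^ (1 - 2 * s - 1) = (x - y) ^ (-(2 * s)) := by ring_nf
        simp only [Pi.neg_apply, e1, e2, e3, e4, hq, wt]; ring
    have R : (∫ y in (x + ε)..1, -((y - x) ^ (-(2 * s)) * (wt s y * q y))) =
        (1 - x) ^ (1 - 2 * s) * u 1 - (x + ε - x) ^ (1 - 2 * s) * u (x + ε) := by
      apply intervalIntegral.integral_eq_sub_of_hasDerivAt_of_le
        (f := fun y => (y - x) ^ (1 - 2 * s) * u y) (by linarith) _ _ iR.neg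
      · refine ContinuousOn.mul ?_ huc.continuousOn
        refine ContinuousOn.rpow_const (by fun_prop) fun y hy => Or.inl ?_
        have := hy.1
        exact ne_of_gt (by linarith)
      · intro y hy
        have hy1 : 0 < y - x := by linarith [hy.1]
        have hy0 : 0 < y := by linarith
        have a1 : HasDerivAt (fun t : ℝ => (t - x) ^ (1 - 2 * s))
            (1 * (1 - 2 * s) * (y - x) ^ (1 - 2 * s - 1)) y :=
          ((hasDerivAt_id y).sub_const x).rpow_const (Or.inl (by simp; linarith))
        convert! a1.mul (hasDerivAt_w (s := s) hy0 hy.2 (hφ y)) using 1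
        have e1 : y ^ s = y ^ (s - 1) * y := by
          rw [← Real.rpow_add_one hy0.ne']; ring_nf
        have e2 : (1 - y) ^ s = (1 - y) ^ (s - 1) * (1 - y) := by
          rw [← Real.rpow_add_one (by linarith [hy.2] : (1:ℝ) - y ≠ 0)]; ring_nf
        have e3 : (y - x) ^ (1 - 2 * s) = (y - x) ^ (-(2 * s)) * (y - x) := by
          rw [← Real.rpow_add_one hy1.ne']; ring_nf
        have e4 : (y - x) ^ (1 - 2 * s - 1) = (y - x) ^ (-(2 * s)) := by ring_nf
        simp only [Pi.neg_apply, e1, e2, e3, e4, hq, wt]; ring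
    rw [intervalIntegral.integral_neg] at R
    have u0 : u 0 = 0 := by simp [hu, Real.zero_rpow hs0.ne']
    have u1 : u 1 = 0 := by simp [hu, Real.zero_rpow hs0.ne']
    rw [u0] at L
    rw [u1] at R
    rw [L, sub_eq_add_neg, R]
    ring_nf
  have hux := hasDerivAt_w (s := s) hx0 hx1 (hφ x)
  have hlim : Tendsto (fun ε => ε ^ (2 - 2 * s) * (ε⁻¹ * (u (x - ε) - u (x + ε))))
      (nhdsWithin 0 (Ioi 0)) (nhds 0) := by
    set D := (wt s x * (x * (1 - x) * dφ x + s * (1 - 2 * x) * φ x))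
    have hg : HasDerivAt (fun ε => u (x - ε) - u (x + ε)) (-D - D) 0 := by
      have b1 : HasDerivAt (fun ε => u (x - ε)) (-D) 0 := by
        apply HasDerivAt.comp_const_sub
        simpa using hux
      have b2 : HasDerivAt (fun ε => u (x + ε)) D 0 := by
        apply HasDerivAt.comp_const_add
        simpa using hux
      exact b1.sub b2
    have hg' := hg.tendsto_slope_zero_right
    simp only [zero_add, sub_zero, add_zero, sub_self, smul_eq_mul] at hg'
    have hp : Tendsto (fun ε : ℝ => ε ^ (2 - 2 * s)) (nhdsWithin 0 (Ioi 0)) (nhds 0) := by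
      have := (Real.continuous_rpow_const (by linarith : 0 ≤ 2 - 2 * s)).tendsto 0
      rw [Real.zero_rpow (by linarith)] at this
      exact this.mono_left nhdsWithin_le_nhds
    simpa using hp.mul hg'
  refine hlim.congr' ?_
  filter_upwards [hev] with ε ⟨a, b, c⟩
  rw [key ε a b c, ← mul_assoc, ← Real.rpow_neg_one ε, ← Real.rpow_add a]
  ring_nf
noncomputable def DD (x y : ℝ) : ℝ := x ^ 2 + (1 - 2 * x) * y
noncomputable def hat (x y : ℝ) : ℝ := x ^ 2 * (1 - y) / DD x y
noncomputable def vv (x y : ℝ) : ℝ := (x - y) ^ 2 / DD x y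

lemma DD_pos {x y : ℝ} (hx : x ∈ Ioo (0:ℝ) 1) (hy : y ∈ Icc (0:ℝ) 1) : 0 < DD x y := by
  obtain ⟨a, b⟩ := hx
  obtain ⟨c, d⟩ := hy
  have : DD x y = x ^ 2 * (1 - y) + (1 - x) ^ 2 * y := by rw [DD]; ring
  rw [this]
  rcases eq_or_lt_of_le c with h | h
  · rw [← h]; simp; positivity
  · have : 0 < (1 - x) ^ 2 := by have : 0 < 1 - x := by linarith
                                 positivity
    have h2 : 0 ≤ 1 - y := by linarith
    positivity

lemma hasDerivAt_hat {x y : ℝ} (h : DD x y ≠ 0) :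
    HasDerivAt (hat x) (-(x * (1 - x) / DD x y) ^ 2) y := by
  have a1 : HasDerivAt (fun t => x ^ 2 * (1 - t)) (x ^ 2 * (-1)) y :=
    ((hasDerivAt_id y).const_sub 1).const_mul _
  have a2 : HasDerivAt (fun t => DD x t) ((1 - 2 * x) * 1) y :=
    ((hasDerivAt_id y).const_mul _).const_add _
  convert! a1.div a2 h using 1
  field_simp
  rw [DD]; ring

lemma hasDerivAt_vv {x y : ℝ} (h : DD x y ≠ 0) :
    HasDerivAt (vv x) (-((x - y) * (x + (1 - 2 * x) * y) / DD x y ^ 2)) y := by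
  have a1 : HasDerivAt (fun t => (x - t) ^ 2) (2 * (x - y) * (-1)) y := by
    convert! ((hasDerivAt_id y).const_sub x).pow 2 using 1
    simp
  have a2 : HasDerivAt (fun t => DD x t) ((1 - 2 * x) * 1) y :=
    ((hasDerivAt_id y).const_mul _).const_add _
  convert! a1.div a2 h using 1
  field_simp
  rw [DD]; ring

lemma hat_sub {x y : ℝ} (h : DD x y ≠ 0) : hat x y - x = x * (1 - x) * (x - y) / DD x y := by
  rw [hat]; field_simp; rw [DD]; ring

lemma one_sub_hat {x y : ℝ} (h : DD x y ≠ 0) : 1 - hat x y = (1 - x) ^ 2 * y / DD x y := by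
  rw [hat]; field_simp; rw [DD]; ring

lemma one_sub_vv {x y : ℝ} (h : DD x y ≠ 0) : 1 - vv x y = y * (1 - y) / DD x y := by
  rw [vv]; field_simp; rw [DD]; ring

lemma hat_hat {x y : ℝ} (hx : x ∈ Ioo (0:ℝ) 1) (hy : y ∈ Icc (0:ℝ) 1) : hat x (hat x y) = y := by
  have h := (DD_pos hx hy).ne'
  have hx0 := hx.1.ne'
  have hx1 : 1 - x ≠ 0 := by linarith [hx.2]
  have e : DD x (hat x y) = x ^ 2 * (1 - x) ^ 2 / DD x y := by
    have : DD x (hat x y) = x ^ 2 * (1 - hat x y) + (1 - x) ^ 2 * hat x y := by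
      rw [DD]; ring
    rw [this, one_sub_hat h, hat]; field_simp; ring
  have : hat x (hat x y) = x ^ 2 * (1 - hat x y) / DD x (hat x y) := rfl
  rw [this, e, one_sub_hat h]; field_simp

lemma hat_mem_hi {x y : ℝ} (hx : x ∈ Ioo (0:ℝ) 1) (h0 : 0 < y) (h1 : y < x) :
    x < hat x y ∧ hat x y < 1 := by
  have hD := DD_pos hx ⟨h0.le, by linarith [hx.2]⟩
  have a := hat_sub hD.ne'
  have b := one_sub_hat hD.ne'
  have hx0 := hx.1
  have hx1 : 0 < 1 - x := by linarith [hx.2]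
  have h2 : 0 < x - y := by linarith
  have : 0 < x * (1 - x) * (x - y) / DD x y := by positivity
  have : 0 < (1 - x) ^ 2 * y / DD x y := by positivity
  constructor <;> linarith

lemma hat_mem_lo {x y : ℝ} (hx : x ∈ Ioo (0:ℝ) 1) (h0 : x < y) (h1 : y < 1) :
    0 < hat x y ∧ hat x y < x := by
  have hx0 := hx.1
  have hD := DD_pos hx ⟨by linarith, h1.le⟩
  have a := hat_sub hD.ne'
  have hx1 : 0 < 1 - x := by linarith [hx.2]
  have h2 : 0 < y - x := by linarith
  have h3 : 0 < 1 - y := by linarith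
  have : 0 < x * (1 - x) * (y - x) / DD x y := by positivity
  have e : x * (1 - x) * (y - x) / DD x y = - (x * (1 - x) * (x - y) / DD x y) := by ring
  constructor
  · rw [hat]; positivity
  · linarith

lemma hat_anti {x y z : ℝ} (hx : x ∈ Ioo (0:ℝ) 1) (hy : y ∈ Icc (0:ℝ) 1) (hz : z ∈ Icc (0:ℝ) 1)
    (h : y < z) : hat x z < hat x y := by
  have h1 := DD_pos hx hy
  have h2 := DD_pos hx hz
  have hx0 := hx.1
  have hx1 : 0 < 1 - x := by linarith [hx.2]
  rw [hat, hat, div_lt_div_iff₀ h2 h1]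
  have : 0 < x ^ 2 * (1 - x) ^ 2 * (z - y) := by
    have : 0 < z - y := by linarith
    positivity
  have e : x ^ 2 * (1 - y) * DD x z - x ^ 2 * (1 - z) * DD x y = x ^ 2 * (1 - x) ^ 2 * (z - y) := by
    rw [DD, DD]; ring
  linarith

lemma fold_point {s x z : ℝ} (hx : x ∈ Ioo (0:ℝ) 1) (h0 : 0 < z) (h1 : z < x) :
    |-(x * (1 - x) / DD x z) ^ 2| * ((hat x z - x) ^ (-(2 * s)) * wt s (hat x z)) =
      (x - z) ^ (-(2 * s)) * wt s z := by
  have hD := DD_pos hx ⟨h0.le, by linarith [hx.2]⟩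
  have hx0 := hx.1
  have hx1 : 0 < 1 - x := by linarith [hx.2]
  have h2 : 0 < x - z := by linarith
  have h3 : 0 < 1 - z := by linarith
  set m := x * (1 - x) / DD x z with hm
  have hmp : 0 < m := by positivity
  have e1 : hat x z - x = m * (x - z) := by rw [hat_sub hD.ne', hm]; ring
  have e2 : wt s (hat x z) = m ^ (s - 1) * m ^ (s - 1) * wt s z := by
    have hh := hat_mem_hi hx h0 h1
    rw [wt, wt, one_sub_hat hD.ne', hat, ← Real.mul_rpow (by positivity) (by positivity),
      ← Real.mul_rpow (by positivity) (by positivity),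
      ← Real.mul_rpow (by positivity) (by positivity),
      ← Real.mul_rpow (by positivity) (by positivity)]
    congr 1
    rw [hm]; field_simp
  rw [abs_neg, abs_of_pos (by positivity), e1, e2, Real.mul_rpow hmp.le h2.le]
  have e3 : m ^ 2 * (m ^ (-(2 * s)) * (m ^ (s - 1) * m ^ (s - 1))) = 1 := by
    rw [← Real.rpow_natCast m 2, ← Real.rpow_add hmp, ← Real.rpow_add hmp, ← Real.rpow_add hmp]
    push_cast; ring_nf; exact Real.rpow_zero m
  linear_combination ((x - z) ^ (-(2 * s)) * wt s z) * e3

lemma vv_point {s x z : ℝ} (hx : x ∈ Ioo (0:ℝ) 1) (h0 : 0 < z) (h1 : z < x) :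
    (x - z) ^ (-(2 * s)) * wt s z * DD x z = (vv x z) ^ (-s) * (1 - vv x z) ^ (s - 1) := by
  have hD := DD_pos hx ⟨h0.le, by linarith [hx.2]⟩
  have hx0 := hx.1
  have hx1 : 0 < 1 - x := by linarith [hx.2]
  have h2 : 0 < x - z := by linarith
  have h3 : 0 < 1 - z := by linarith
  rw [one_sub_vv hD.ne', vv, Real.div_rpow (by positivity) hD.le,
    Real.div_rpow (by positivity) hD.le, wt, ← Real.mul_rpow h0.le h3.le]
  have e1 : ((x - z) ^ 2) ^ (-s) = (x - z) ^ (-(2 * s)) := by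
    rw [← Real.rpow_natCast (x - z) 2, ← Real.rpow_mul h2.le]; push_cast; ring_nf
  have e2 : DD x z ^ (-s) * DD x z ^ (s - 1) * DD x z = 1 := by
    rw [← Real.rpow_add hD, ← Real.rpow_add_one hD.ne']
    ring_nf; exact Real.rpow_zero _
  rw [e1]
  have p1 := Real.rpow_pos_of_pos hD (-s)
  have p2 := Real.rpow_pos_of_pos hD (s - 1)
  field_simp
  linear_combination e2

lemma vv_mem {x z : ℝ} (hx : x ∈ Ioo (0:ℝ) 1) (h0 : 0 < z) (h1 : z < x) : vv x z ∈ Ioo (0:ℝ) 1 := by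
  have hD := DD_pos hx ⟨h0.le, by linarith [hx.2]⟩
  have h2 : 0 < x - z := by linarith
  have h3 : 0 < 1 - z := by linarith [hx.2]
  have := one_sub_vv hD.ne'
  have h5 : 0 < z * (1 - z) / DD x z := by positivity
  refine ⟨by rw [vv]; positivity, by linarith⟩

lemma fold_int {s x b a : ℝ} (hx : x ∈ Ioo (0:ℝ) 1) (ha : x < a) (ha1 : a < 1) (hb : b = hat x a)
    {q : ℝ → ℝ}
    (hi : IntervalIntegrable (fun y => (y - x) ^ (-(2 * s)) * (wt s y * q y)) volume a 1) :
    IntervalIntegrable (fun z => (x - z) ^ (-(2 * s)) * (wt s z * q (hat x z))) volume 0 b ∧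
    ∫ y in a..1, (y - x) ^ (-(2 * s)) * (wt s y * q y) =
      ∫ z in (0:ℝ)..b, (x - z) ^ (-(2 * s)) * (wt s z * q (hat x z)) := by
  have hx0 := hx.1
  obtain ⟨hb0, hbx⟩ := hat_mem_lo hx ha ha1
  rw [← hb] at hb0 hbx
  have haI : a ∈ Icc (0:ℝ) 1 := ⟨by linarith, ha1.le⟩
  have hbI : b ∈ Icc (0:ℝ) 1 := ⟨hb0.le, by linarith⟩
  have hab : hat x b = a := by rw [hb]; exact hat_hat hx haI
  have himg : hat x '' Ioo 0 b = Ioo a 1 := by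
    ext y
    constructor
    · rintro ⟨z, ⟨h0, h1⟩, rfl⟩
      have := hat_mem_hi hx h0 (h1.trans hbx)
      refine ⟨?_, this.2⟩
      rw [← hab]
      exact hat_anti hx ⟨h0.le, by linarith⟩ hbI h1
    · rintro ⟨h0, h1⟩
      have hyI : y ∈ Icc (0:ℝ) 1 := ⟨by linarith, h1.le⟩
      refine ⟨hat x y, ⟨(hat_mem_lo hx (by linarith) h1).1, ?_⟩, hat_hat hx hyI⟩
      rw [hb]
      exact hat_anti hx haI hyI h0
  have hder : ∀ z ∈ Ioo 0 b, HasDerivWithinAt (hat x) (-(x * (1 - x) / DD x z) ^ 2) (Ioo 0 b) z :=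
    fun z hz => (hasDerivAt_hat (DD_pos hx ⟨hz.1.le, by linarith [hz.2]⟩).ne').hasDerivWithinAt
  have hinj : InjOn (hat x) (Ioo 0 b) := by
    intro z hz w hw h
    rw [← hat_hat hx (y := z) ⟨hz.1.le, by linarith [hz.2]⟩,
      ← hat_hat hx (y := w) ⟨hw.1.le, by linarith [hw.2]⟩, h]
  have hcongr : EqOn (fun z => |-(x * (1 - x) / DD x z) ^ 2| •
      ((fun y => (y - x) ^ (-(2 * s)) * (wt s y * q y)) (hat x z)))
      (fun z => (x - z) ^ (-(2 * s)) * (wt s z * q (hat x z))) (Ioo 0 b) := by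
    intro z hz
    have := fold_point (s := s) hx hz.1 (hz.2.trans hbx)
    simp only [smul_eq_mul]
    linear_combination q (hat x z) * this
  rw [intervalIntegrable_iff_integrableOn_Ioo_of_le ha1.le, ← himg,
    integrableOn_image_iff_integrableOn_abs_deriv_smul measurableSet_Ioo hder hinj] at hi
  constructor
  · rw [intervalIntegrable_iff_integrableOn_Ioo_of_le hb0.le]
    exact hi.congr_fun hcongr measurableSet_Ioo
  · rw [intervalIntegral.integral_of_le ha1.le, intervalIntegral.integral_of_le hb0.le,
      integral_Ioc_eq_integral_Ioo, integral_Ioc_eq_integral_Ioo, ← himg,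
      integral_image_eq_integral_abs_deriv_smul measurableSet_Ioo hder hinj]
    exact setIntegral_congr_fun measurableSet_Ioo hcongr

lemma FTC_part {s x b : ℝ} (hs : s ∈ Ioo (0:ℝ) 1) (hx : x ∈ Ioo (0:ℝ) 1) (hb0 : 0 < b) (hbx : b < x)
    {q k : ℝ → ℝ} (hk : Continuous k)
    (hid : ∀ z ∈ Ioo 0 x, q z - q (hat x z) =
      DD x z * k (vv x z) * ((x - z) * (x + (1 - 2 * x) * z) / DD x z ^ 2))
    (hi : IntervalIntegrable (fun z => (x - z) ^ (-(2 * s)) * (wt s z * (q z - q (hat x z))))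
      volume 0 b) :
    ∫ z in (0:ℝ)..b, (x - z) ^ (-(2 * s)) * (wt s z * (q z - q (hat x z))) =
      ∫ r in (vv x b)..1, r ^ (-s) * (1 - r) ^ (s - 1) * k r := by
  have hkint : IntervalIntegrable (fun r => r ^ (-s) * (1 - r) ^ (s - 1) * k r) volume 0 1 := by
    have := (beta_intervalIntegrable (a := 1 - s) (b := s) (by linarith [hs.2]) hs.1).mul_continuousOn
      hk.continuousOn
    refine this.congr ?_
    intro r _
    simp
  set F : ℝ → ℝ := fun v => ∫ r in v..1, r ^ (-s) * (1 - r) ^ (s - 1) * k r with hF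
  have hFc : ContinuousOn F (Icc 0 1) := by
    have := intervalIntegral.continuousOn_primitive_interval_left (a := 0) (b := 1)
      (f := fun r => r ^ (-s) * (1 - r) ^ (s - 1) * k r) (μ := volume)
      (by rw [uIcc_of_le (by norm_num), ← intervalIntegrable_iff_integrableOn_Icc_of_le (by norm_num)]
          exact hkint)
    rwa [uIcc_of_le (by norm_num)] at this
  have hFd : ∀ v ∈ Ioo (0:ℝ) 1, HasDerivAt F (-(v ^ (-s) * (1 - v) ^ (s - 1) * k v)) v := by
    intro v hv
    have hca : ∀ r ∈ Ioo (0:ℝ) 1, ContinuousAt (fun r => r ^ (-s) * (1 - r) ^ (s - 1) * k r) r := by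
      intro r hr
      refine ContinuousAt.mul (ContinuousAt.mul ?_ ?_) hk.continuousAt
      · exact Real.continuousAt_rpow_const _ _ (Or.inl hr.1.ne')
      · exact ContinuousAt.rpow_const (by fun_prop) (Or.inl (by linarith [hr.2]))
    apply intervalIntegral.integral_hasDerivAt_left
    · exact hkint.mono_set (by
        rw [uIcc_of_le zero_le_one, uIcc_of_le hv.2.le]; exact Icc_subset_Icc hv.1.le le_rfl)
    · exact ContinuousOn.stronglyMeasurableAtFilter isOpen_Ioo
        (fun r hr => (hca r hr).continuousWithinAt) v hv
    · exact hca v hv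
  have hDp : ∀ z ∈ Icc 0 b, 0 < DD x z := fun z hz => DD_pos hx ⟨hz.1, by linarith [hz.2, hx.2]⟩
  have hv0 : vv x 0 = 1 := by
    have := hx.1.ne'
    simp [vv, DD, this]
  have hmem : ∀ z ∈ Icc 0 b, vv x z ∈ Icc (0:ℝ) 1 := by
    intro z hz
    rcases eq_or_lt_of_le hz.1 with h | h
    · rw [← h, hv0]; simp
    · exact Ioo_subset_Icc_self (vv_mem hx h (by linarith [hz.2]))
  have := intervalIntegral.integral_eq_sub_of_hasDerivAt_of_le (f := fun z => F (vv x z)) hb0.le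
    (hFc.comp (fun z hz => (hasDerivAt_vv (hDp z hz).ne').continuousAt.continuousWithinAt) hmem)
    (f' := fun z => (x - z) ^ (-(2 * s)) * (wt s z * (q z - q (hat x z)))) (fun z hz => by
      have hzx : z < x := hz.2.trans hbx
      have hD := (hDp z ⟨hz.1.le, hz.2.le⟩).ne'
      have h1 := (hFd _ (vv_mem hx hz.1 hzx)).comp z (hasDerivAt_vv hD)
      convert! h1 using 1
      rw [hid z ⟨hz.1, hzx⟩, ← vv_point (s := s) hx hz.1 hzx]
      ring) hi
  rw [this]
  simp only [hv0]
  simp [hF]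

lemma base_tendsto {s x : ℝ} (hs : s ∈ Ioo (0:ℝ) 1) (hx : x ∈ Ioo (0:ℝ) 1)
    {q k : ℝ → ℝ} (hq : Continuous q) (hk : Continuous k)
    (hid : ∀ z ∈ Ioo 0 x, q z - q (hat x z) =
      DD x z * k (vv x z) * ((x - z) * (x + (1 - 2 * x) * z) / DD x z ^ 2)) :
    Tendsto (fun ε => EE s x ε q) (nhdsWithin 0 (Ioi 0))
      (nhds (∫ r in (0:ℝ)..1, r ^ (-s) * (1 - r) ^ (s - 1) * k r)) := by
  obtain ⟨hs0, hs1⟩ := id hs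
  obtain ⟨hx0, hx1⟩ := id hx
  have hx1' : 0 < 1 - x := by linarith
  set P := x * (1 - x) with hP
  have hPp : 0 < P := by positivity
  have hPx : P ≤ x := by nlinarith
  have hPx' : P ≤ 1 - x := by nlinarith
  have hkint : IntervalIntegrable (fun r => r ^ (-s) * (1 - r) ^ (s - 1) * k r) volume 0 1 := by
    have := (beta_intervalIntegrable (a := 1 - s) (b := s) (by linarith [hs.2]) hs.1).mul_continuousOn
      hk.continuousOn
    refine this.congr ?_
    intro r _
    simp
  have hev : ∀ᶠ ε in nhdsWithin (0:ℝ) (Ioi 0), 0 < ε ∧ ε < P / 4 := by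
    filter_upwards [self_mem_nhdsWithin,
      nhdsWithin_le_nhds (Iio_mem_nhds (by linarith : 0 < P / 4))] with ε a b
    exact ⟨a, b⟩
  -- facts on b = hat (x+ε)
  have hbfacts : ∀ ε, 0 < ε → ε < P / 4 →
      x - hat x (x + ε) ≥ ε / 2 ∧ x - hat x (x + ε) ≤ 2 * ε ∧
      |x - ε - hat x (x + ε)| ≤ 2 / P * ε ^ 2 := by
    intro ε h0 h1
    have hD := DD_pos hx (y := x + ε) ⟨by linarith, by linarith⟩
    have e := hat_sub hD.ne'
    have eD : DD x (x + ε) = P + (1 - 2 * x) * ε := by rw [DD, hP]; ring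
    have l1 : P / 2 ≤ DD x (x + ε) := by rw [eD]; nlinarith
    have l2 : DD x (x + ε) ≤ 2 * P := by rw [eD]; nlinarith
    have e2 : x - hat x (x + ε) = P * ε / DD x (x + ε) := by
      rw [← neg_sub, e, hP]; ring
    have e3 : x - ε - hat x (x + ε) = -((1 - 2 * x) * ε ^ 2 / DD x (x + ε)) := by
      have : x - ε - hat x (x + ε) = P * ε / DD x (x + ε) - ε := by rw [← e2]; ring
      rw [this]; field_simp; rw [eD]; ring
    refine ⟨?_, ?_, ?_⟩
    · rw [e2, ge_iff_le, le_div_iff₀ hD]; nlinarith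
    · rw [e2, div_le_iff₀ hD]; nlinarith
    · rw [e3, abs_neg, abs_div, abs_mul, abs_of_pos hD, abs_of_pos (by positivity : 0 < ε ^ 2),
        div_le_iff₀ hD]
      have l3 : |1 - 2 * x| ≤ 1 := abs_le.2 ⟨by linarith, by linarith⟩
      have l4 : 1 ≤ 2 / P * DD x (x + ε) := by
        rw [div_mul_eq_mul_div, le_div_iff₀ hPp]; linarith
      calc |1 - 2 * x| * ε ^ 2 ≤ 1 * ε ^ 2 := by gcongr
        _ ≤ (2 / P * DD x (x + ε)) * ε ^ 2 := by gcongr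
        _ = _ := by ring
  -- bound on weight
  obtain ⟨C, hC⟩ : ∃ C, ∀ y ∈ Icc (x / 2) x, ‖wt s y * q y‖ ≤ C := by
    apply isCompact_Icc.exists_bound_of_continuousOn
    refine ContinuousOn.mul ?_ hq.continuousOn
    refine ContinuousOn.mul ?_ ?_
    · exact ContinuousOn.rpow_const (by fun_prop) fun y hy => Or.inl (by linarith [hy.1])
    · exact ContinuousOn.rpow_const (by fun_prop) fun y hy => Or.inl (by linarith [hy.2])
  have hC0 : 0 ≤ C := (norm_nonneg _).trans (hC x ⟨by linarith, le_rfl⟩)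
  set F : ℝ → ℝ := fun v => ∫ r in v..1, r ^ (-s) * (1 - r) ^ (s - 1) * k r with hF
  set R : ℝ → ℝ := fun ε => ∫ y in (hat x (x + ε))..(x - ε), (x - y) ^ (-(2 * s)) * (wt s y * q y)
    with hR
  have hmain : ∀ ε, 0 < ε → ε < P / 4 → EE s x ε q = F (vv x (hat x (x + ε))) + R ε := by
    intro ε h0 h1
    obtain ⟨iL, iR, hE⟩ := EE_split (x := x) hs0 h0 (by linarith) (by linarith) hq
    obtain ⟨b1, b2, b3⟩ := hbfacts ε h0 h1
    have hlo := hat_mem_lo hx (y := x + ε) (by linarith) (by linarith)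
    obtain ⟨iF, eF⟩ := fold_int hx (a := x + ε) (by linarith) (by linarith) rfl iR
    set b := hat x (x + ε) with hb
    -- integrability on [0, max]
    have iM : IntervalIntegrable (fun y => (x - y) ^ (-(2 * s)) * (wt s y * q y)) volume 0
        (x - ε / 2) := (EE_split (x := x) (ε := ε / 2) hs0 (by linarith) (by linarith) (by linarith) hq).1
    have iB : IntervalIntegrable (fun y => (x - y) ^ (-(2 * s)) * (wt s y * q y)) volume 0 b :=
      iM.mono_set (by
        rw [uIcc_of_le hlo.1.le, uIcc_of_le (by linarith)]
        exact Icc_subset_Icc le_rfl (by linarith))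
    have hsplit := intervalIntegral.integral_interval_sub_left iL iB
    have hd : IntervalIntegrable (fun z => (x - z) ^ (-(2 * s)) * (wt s z * (q z - q (hat x z))))
        volume 0 b := (iB.sub iF).congr (fun z _ => by ring)
    have hfin := FTC_part hs hx hlo.1 hlo.2 hk hid hd
    have hsub : ∫ z in (0:ℝ)..b, (x - z) ^ (-(2 * s)) * (wt s z * (q z - q (hat x z))) =
        (∫ z in (0:ℝ)..b, (x - z) ^ (-(2 * s)) * (wt s z * q z)) -
        ∫ z in (0:ℝ)..b, (x - z) ^ (-(2 * s)) * (wt s z * q (hat x z)) := by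
      rw [← intervalIntegral.integral_sub iB iF]
      congr 1; funext z; ring
    rw [hE, eF, hF, hR]
    simp only
    rw [← hfin, hsub, ← hsplit]; ring
  have hRlim : Tendsto R (nhdsWithin 0 (Ioi 0)) (nhds 0) := by
    have hp : Tendsto (fun ε : ℝ => (C * (2 / P) * 4) * (ε / 2) ^ (2 - 2 * s))
        (nhdsWithin 0 (Ioi 0)) (nhds 0) := by
      have h1 : Continuous (fun ε : ℝ => (C * (2 / P) * 4) * (ε / 2) ^ (2 - 2 * s)) :=
        continuous_const.mul ((Real.continuous_rpow_const (by linarith : 0 ≤ 2 - 2 * s)).comp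
          (by fun_prop : Continuous fun ε : ℝ => ε / 2))
      have := h1.tendsto 0
      simp only [zero_div, Real.zero_rpow (by linarith : 2 - 2 * s ≠ 0), mul_zero] at this
      exact this.mono_left nhdsWithin_le_nhds
    refine squeeze_zero_norm' ?_ hp
    filter_upwards [hev] with ε ⟨h0, h1⟩
    obtain ⟨b1, b2, b3⟩ := hbfacts ε h0 h1
    have hbd : ∀ y ∈ Set.uIoc (hat x (x + ε)) (x - ε),
        ‖(x - y) ^ (-(2 * s)) * (wt s y * q y)‖ ≤ (ε / 2) ^ (-(2 * s)) * C := by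
      intro y hy
      have hy1 : x / 2 ≤ y := by
        have := hy.1
        have h3 : x / 2 ≤ min (hat x (x + ε)) (x - ε) := le_min (by linarith) (by linarith)
        linarith
      have hy2 : y ≤ x - ε / 2 := by
        have := hy.2
        have h3 : max (hat x (x + ε)) (x - ε) ≤ x - ε / 2 := max_le (by linarith) (by linarith)
        linarith
      rw [norm_mul, Real.norm_of_nonneg (Real.rpow_nonneg (by linarith) _)]
      exact mul_le_mul (Real.rpow_le_rpow_of_nonpos (by linarith) (by linarith) (by linarith))
        (hC y ⟨hy1, by linarith⟩) (norm_nonneg _) (Real.rpow_nonneg (by linarith) _)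
    have := intervalIntegral.norm_integral_le_of_norm_le_const hbd
    refine this.trans ?_
    have h5 : 0 ≤ (ε / 2) ^ (-(2 * s)) * C := mul_nonneg (Real.rpow_nonneg (by linarith) _) hC0
    refine (mul_le_mul_of_nonneg_left b3 h5).trans (le_of_eq ?_)
    have e : (ε / 2) ^ (2 - 2 * s) = (ε / 2) ^ (-(2 * s)) * (ε / 2) ^ 2 := by
      rw [← Real.rpow_natCast (ε / 2) 2, ← Real.rpow_add (by linarith)]; push_cast; ring_nf
    rw [e]; ring
  have hFlim : Tendsto (fun ε => F (vv x (hat x (x + ε)))) (nhdsWithin 0 (Ioi 0)) (nhds (F 0)) := by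
    have hFc : ContinuousOn F (Icc 0 1) := by
      have := intervalIntegral.continuousOn_primitive_interval_left (a := 0) (b := 1)
        (f := fun r => r ^ (-s) * (1 - r) ^ (s - 1) * k r) (μ := volume)
        (by rw [uIcc_of_le (by norm_num),
              ← intervalIntegrable_iff_integrableOn_Icc_of_le (by norm_num)]
            exact hkint)
      rwa [uIcc_of_le (by norm_num)] at this
    have h0 : Tendsto F (nhdsWithin 0 (Icc 0 1)) (nhds (F 0)) := hFc 0 (by simp)
    refine h0.comp (tendsto_nhdsWithin_iff.2 ⟨?_, ?_⟩)
    · have hDx := DD_pos hx (y := x) ⟨hx0.le, hx1.le⟩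
      have c1 : ContinuousAt (hat x) (x + 0) := by
        rw [add_zero]; exact (hasDerivAt_hat hDx.ne').continuousAt
      have hhx : hat x (x + 0) = x := by
        have := hat_sub hDx.ne'
        rw [add_zero]; simp at this; linarith
      have c2 : ContinuousAt (vv x) (hat x (x + 0)) := by
        rw [hhx]; exact (hasDerivAt_vv hDx.ne').continuousAt
      have c3 : ContinuousAt (fun ε => vv x (hat x (x + ε))) 0 := by
        have c0 : ContinuousAt (fun ε : ℝ => x + ε) 0 := by fun_prop
        exact ContinuousAt.comp (f := fun ε => hat x (x + ε)) c2
          (ContinuousAt.comp (f := fun ε : ℝ => x + ε) c1 c0)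
      have h4 : vv x (hat x (x + 0)) = 0 := by rw [hhx]; simp [vv]
      have h5 := c3.tendsto
      rw [h4] at h5
      exact h5.mono_left nhdsWithin_le_nhds
    · filter_upwards [hev] with ε ⟨h0, h1⟩
      have hlo := hat_mem_lo hx (y := x + ε) (by linarith) (by linarith)
      exact Ioo_subset_Icc_self (vv_mem hx hlo.1 hlo.2)
  have := hFlim.add hRlim
  rw [add_zero] at this
  refine this.congr' ?_
  filter_upwards [hev] with ε ⟨h0, h1⟩
  exact (hmain ε h0 h1).symm
lemma EE_lin3 {s x ε : ℝ} (hs : 0 < s) (hε : 0 < ε) {q1 q2 q3 : ℝ → ℝ} (h1 : Continuous q1)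
    (h2 : Continuous q2) (h3 : Continuous q3) (a b c : ℝ) :
    EE s x ε (fun y => a * q1 y + b * q2 y + c * q3 y) =
      a * EE s x ε q1 + b * EE s x ε q2 + c * EE s x ε q3 := by
  have i1 := (EE_int (x := x) hs hε h1).const_mul a
  have i2 := (EE_int (x := x) hs hε h2).const_mul b
  have i3 := (EE_int (x := x) hs hε h3).const_mul c
  have i12 : Integrable (fun y => a * (kr s x y * (wt s y * q1 y)) +
      b * (kr s x y * (wt s y * q2 y))) (volume.restrict (SS x ε)) := i1.add i2
  simp only [EE]
  rw [← integral_const_mul, ← integral_const_mul, ← integral_const_mul, ← integral_add i1 i2,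
    ← integral_add i12 i3]
  congr 1; funext y; ring

noncomputable def QQ (s : ℝ) (n : ℕ) (y : ℝ) : ℝ :=
  y * (1 - y) * (2 * dgegen (s + 1 / 2) n (2 * y - 1)) +
    s * (1 - 2 * y) * gegen (s + 1 / 2) n (2 * y - 1)

lemma continuous_QQ (s : ℝ) (n : ℕ) : Continuous (QQ s n) := by
  have h1 := continuous_gegen (s + 1 / 2) n
  have h2 := continuous_dgegen (s + 1 / 2) n
  unfold QQ
  fun_prop

lemma hasDerivAt_phi (s : ℝ) (n : ℕ) (y : ℝ) :
    HasDerivAt (fun t => gegen (s + 1 / 2) n (2 * t - 1)) (2 * dgegen (s + 1 / 2) n (2 * y - 1)) y := by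
  have h1 : HasDerivAt (fun t : ℝ => 2 * t - 1) (2 * 1) y :=
    ((hasDerivAt_id y).const_mul 2).sub_const 1
  convert! (hasDerivAt_gegen (s + 1 / 2) n (2 * y - 1)).comp y h1 using 1
  ring

noncomputable def PP (s x : ℝ) (n : ℕ) (y : ℝ) : ℝ :=
  (x - y) * QQ s n y - (1 - 2 * s) * (y * (1 - y) * gegen (s + 1 / 2) n (2 * y - 1))

lemma continuous_PP (s x : ℝ) (n : ℕ) : Continuous (PP s x n) := by
  have h1 := continuous_gegen (s + 1 / 2) n
  have h2 := continuous_QQ s n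
  unfold PP
  fun_prop

lemma PP_tendsto {s x : ℝ} (hs : s ∈ Ioo (0:ℝ) 1) (hx : x ∈ Ioo (0:ℝ) 1) (n : ℕ) :
    Tendsto (fun ε => EE s x ε (PP s x n)) (nhdsWithin 0 (Ioi 0)) (nhds 0) := by
  have h2 := continuous_dgegen (s + 1 / 2) n
  exact IBP_tendsto hs hx (hasDerivAt_phi s n) (by fun_prop)

lemma QQ_a (s : ℝ) (n : ℕ) (y : ℝ) : QQ s n y = (n + 1) / 2 *
    ((2 * y - 1) * gegen (s + 1 / 2) n (2 * y - 1) - gegen (s + 1 / 2) (n + 1) (2 * y - 1)) := by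
  have := (gegen_A (s + 1 / 2) n (2 * y - 1)).1
  rw [QQ]; linear_combination this / 2

lemma QQ_b (s : ℝ) (n : ℕ) (y : ℝ) : QQ s (n + 1) y = (n + 1 + 2 * s) / 2 *
    (gegen (s + 1 / 2) n (2 * y - 1) - (2 * y - 1) * gegen (s + 1 / 2) (n + 1) (2 * y - 1)) := by
  have := (gegen_A (s + 1 / 2) n (2 * y - 1)).2
  rw [QQ]; linear_combination this / 2

lemma QQ_step {s : ℝ} (hs : 0 < s) (x : ℝ) (n : ℕ) (y : ℝ) :
    QQ s (n + 2) y =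
      ((n + 2 + 2 * s) / (n + 2) ^ 2 * (2 * (n + 1 + (s + 1 / 2)) * (2 * x - 1))) * QQ s (n + 1) y +
      (-((n + 2 + 2 * s) / (n + 2) ^ 2 * (4 * (n + 1 + (s + 1 / 2))))) * PP s x (n + 1) y +
      (-((n + 2 + 2 * s) / (n + 2) ^ 2 * ((n + 1 + 2 * s) ^ 2 / (n + 1)))) * QQ s n y := by
  have h2 := QQ_b s (n + 1) y
  have h1 := QQ_b s n y
  have h0 := QQ_a s n y
  have hr := gegen_rec (s + 1 / 2) n (2 * y - 1)
  have hn : (n : ℝ) + 2 ≠ 0 := by positivity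
  have hn1 : (n : ℝ) + 1 ≠ 0 := by positivity
  have hr' : gegen (s + 1 / 2) (n + 2) (2 * y - 1) = (2 * (2 * y - 1) * ((n : ℝ) + 1 + (s + 1 / 2)) *
    gegen (s + 1 / 2) (n + 1) (2 * y - 1) - ((n : ℝ) + 2 * (s + 1 / 2)) *
    gegen (s + 1 / 2) n (2 * y - 1)) / (n + 2) := by
    rw [← hr]; field_simp
  have e : n + 1 + 1 = n + 2 := rfl
  rw [e] at h2
  push_cast at h2
  rw [PP, h2, h1, h0, hr']
  field_simp
  ring

lemma QQ_zero (s y : ℝ) : QQ s 0 y = s * (1 - 2 * y) := by simp [QQ, gegen, dgegen]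

lemma QQ_one (s x y : ℝ) : QQ s 1 y = ((2 * s + 1) * (2 * x - 1)) * QQ s 0 y +
    ((2 * s + 1) * (4 * s)) * (y * (1 - y)) + (-((2 * s + 1) * 2)) * PP s x 0 y := by
  rw [PP, QQ_zero, QQ]; simp [gegen, dgegen]; ring

lemma Q0_tendsto {s x : ℝ} (hs : s ∈ Ioo (0:ℝ) 1) (hx : x ∈ Ioo (0:ℝ) 1) :
    Tendsto (fun ε => EE s x ε (QQ s 0)) (nhdsWithin 0 (Ioi 0))
      (nhds (2 * s * (Real.Gamma s * Real.Gamma (1 - s)))) := by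
  have := base_tendsto hs hx (q := QQ s 0) (k := fun _ => 2 * s) (continuous_QQ s 0)
    continuous_const (by
      intro z hz
      have hD := (DD_pos hx ⟨hz.1.le, by linarith [hz.2, hx.2]⟩).ne'
      rw [QQ_zero, QQ_zero, hat]
      field_simp
      rw [DD]; ring)
  convert! this using 2
  have hb := beta_integral (a := 1 - s) (b := s) (by linarith [hs.2]) hs.1
  rw [intervalIntegral.integral_mul_const]
  simp only [sub_sub_cancel_left, sub_add_cancel, Real.Gamma_one] at hb
  rw [hb]; ring

lemma M0_tendsto {s x : ℝ} (hs : s ∈ Ioo (0:ℝ) 1) (hx : x ∈ Ioo (0:ℝ) 1) :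
    Tendsto (fun ε => EE s x ε (fun y => y * (1 - y))) (nhdsWithin 0 (Ioi 0))
      (nhds ((2 * x - 1) * s * (Real.Gamma s * Real.Gamma (1 - s)))) := by
  have := base_tendsto hs hx (q := fun y => y * (1 - y)) (k := fun r => (1 - r) * (2 * x - 1))
    (by fun_prop) (by fun_prop) (by
      intro z hz
      have hD := (DD_pos hx ⟨hz.1.le, by linarith [hz.2, hx.2]⟩).ne'
      rw [one_sub_vv hD, one_sub_hat hD, hat]
      field_simp
      rw [DD]; ring)
  convert! this using 2
  have hb := beta_integral (a := 1 - s) (b := s + 1) (by linarith [hs.2]) (by linarith [hs.1])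
  have e : (∫ r in (0:ℝ)..1, r ^ (-s) * (1 - r) ^ (s - 1) * ((1 - r) * (2 * x - 1))) =
      ∫ r in (0:ℝ)..1, r ^ (-s) * (1 - r) ^ s * (2 * x - 1) := by
    apply intervalIntegral.integral_congr
    intro r hr
    rw [uIcc_of_le zero_le_one] at hr
    have : (1 - r) ^ s = (1 - r) ^ (s - 1) * (1 - r) := by
      rcases eq_or_lt_of_le hr.2 with h | h
      · simp [h, Real.zero_rpow hs.1.ne']
      · rw [← Real.rpow_add_one (by linarith : (1:ℝ) - r ≠ 0)]; ring_nf
    simp only [this]; ring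
  rw [e, intervalIntegral.integral_mul_const]
  have e2 : 1 - s + (s + 1) = 2 := by ring
  simp only [sub_sub_cancel_left, add_sub_cancel_right, e2, Real.Gamma_two,
    Real.Gamma_add_one hs.1.ne'] at hb
  rw [hb]; ring

lemma main_tendsto {s x : ℝ} (hs : s ∈ Ioo (0:ℝ) 1) (hx : x ∈ Ioo (0:ℝ) 1) (κ : ℝ)
    (hκ : κ * Real.Gamma (2 * s + 1) = 2 * s * (Real.Gamma s * Real.Gamma (1 - s))) (n : ℕ) :
    Tendsto (fun ε => EE s x ε (QQ s n)) (nhdsWithin 0 (Ioi 0))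
      (nhds (κ * (Real.Gamma (2 * s + n + 1) / (n.factorial : ℝ) *
        gegen (s + 1 / 2) n (2 * x - 1)))) := by
  have hs0 := hs.1
  have hpos : ∀ᶠ ε in nhdsWithin (0:ℝ) (Ioi 0), 0 < ε := self_mem_nhdsWithin
  induction n using Nat.strong_induction_on with
  | _ n ih =>
    match n, ih with
    | 0, _ =>
      convert! Q0_tendsto hs hx using 2
      rw [← hκ]; simp [gegen]
    | 1, _ =>
      have h := (((Q0_tendsto hs hx).const_mul ((2 * s + 1) * (2 * x - 1))).add
        ((M0_tendsto hs hx).const_mul ((2 * s + 1) * (4 * s)))).add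
        ((PP_tendsto hs hx 0).const_mul (-((2 * s + 1) * 2)))
      refine (h.congr' ?_).trans (le_of_eq ?_)
      · filter_upwards [hpos] with ε hε
        have := EE_lin3 (x := x) hs0 hε (continuous_QQ s 0) (q2 := fun y => y * (1 - y)) (by fun_prop)
          (continuous_PP s x 0) ((2 * s + 1) * (2 * x - 1)) ((2 * s + 1) * (4 * s))
          (-((2 * s + 1) * 2))
        rw [funext (QQ_one s x), this]
      congr 1
      have e : 2 * s + ((1 : ℕ) : ℝ) + 1 = (2 * s + 1) + 1 := by push_cast; ring
      rw [e, Real.Gamma_add_one (by linarith)]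
      simp only [gegen, Nat.factorial_one, Nat.cast_one, div_one]
      linear_combination -(2 * x - 1) * (2 * s + 1) ^ 2 * hκ
    | (n + 2), ih =>
      have i1 := ih (n + 1) (by omega)
      have i0 := ih n (by omega)
      set a := ((n + 2 + 2 * s) / (n + 2) ^ 2 * (2 * (n + 1 + (s + 1 / 2)) * (2 * x - 1))) with ha
      set b := (-((n + 2 + 2 * s) / (n + 2) ^ 2 * (4 * (n + 1 + (s + 1 / 2))))) with hb
      set c := (-((n + 2 + 2 * s) / (n + 2) ^ 2 * ((n + 1 + 2 * s) ^ 2 / (n + 1)))) with hc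
      have h := ((i1.const_mul a).add ((PP_tendsto hs hx (n + 1)).const_mul b)).add (i0.const_mul c)
      refine (h.congr' ?_).trans (le_of_eq ?_)
      · filter_upwards [hpos] with ε hε
        have := EE_lin3 (x := x) hs0 hε (continuous_QQ s (n + 1)) (continuous_PP s x (n + 1))
          (continuous_QQ s n) a b c
        rw [funext (QQ_step hs0 x n), this]
      congr 1
      have hn : (n : ℝ) + 2 ≠ 0 := by positivity
      have hn1 : (n : ℝ) + 1 ≠ 0 := by positivity
      have e2 : 2 * s + ((n + 2 : ℕ) : ℝ) + 1 = (2 * s + n + 1 + 1) + 1 := by push_cast; ring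
      have e1 : 2 * s + ((n + 1 : ℕ) : ℝ) + 1 = (2 * s + n + 1) + 1 := by push_cast; ring
      rw [e2, e1, Real.Gamma_add_one (by positivity : 2 * s + n + 1 + 1 ≠ 0),
        Real.Gamma_add_one (by positivity : 2 * s + n + 1 ≠ 0)]
      have hf : (n.factorial : ℝ) ≠ 0 := by positivity
      have f1 : ((n + 1).factorial : ℝ) = (n + 1) * n.factorial := by
        rw [Nat.factorial_succ]; push_cast; ring
      have f2 : ((n + 2).factorial : ℝ) = (n + 2) * ((n + 1) * n.factorial) := by
        rw [Nat.factorial_succ, Nat.factorial_succ]; push_cast; ring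
      rw [f1, f2]
      have hr := gegen_rec (s + 1 / 2) n (2 * x - 1)
      have hr' : gegen (s + 1 / 2) (n + 2) (2 * x - 1) =
        (2 * (2 * x - 1) * ((n : ℝ) + 1 + (s + 1 / 2)) *
          gegen (s + 1 / 2) (n + 1) (2 * x - 1) - ((n : ℝ) + 2 * (s + 1 / 2)) *
          gegen (s + 1 / 2) n (2 * x - 1)) / (n + 2) := by
        rw [← hr]; field_simp
      rw [hr', ha, hb, hc]
      field_simp
      ring

lemma const_eq {s : ℝ} (hs : s ∈ Ioo (0:ℝ) 1) :
    (C1 s / (2 * s)) * (2 * s * (Real.Gamma s * Real.Gamma (1 - s))) = Real.Gamma (2 * s + 1) := by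
  have hs0 := hs.1
  have h1 : 0 < Real.Gamma (1 - s) := Real.Gamma_pos_of_pos (by linarith [hs.2])
  have h2 := Real.Gamma_mul_Gamma_add_half s
  have h3 : (0:ℝ) < Real.sqrt Real.pi := Real.sqrt_pos.2 Real.pi_pos
  have h4 : (2:ℝ) ^ (2 * s) * 2 ^ (1 - 2 * s) = 2 := by
    rw [← Real.rpow_add (by norm_num)]; ring_nf; exact Real.rpow_one 2
  rw [Real.Gamma_add_one (by linarith), C1]
  generalize Real.Gamma (s + 1 / 2) = G at h2 ⊢
  field_simp
  linear_combination (2:ℝ) ^ (2 * s) * h2 + Real.Gamma (2 * s) * Real.sqrt Real.pi * h4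

theorem stmt11 (s : ℝ) (hs : s ∈ Set.Ioo (0 : ℝ) 1) (n : ℕ) :
    ∀ x ∈ Set.Ioo (0 : ℝ) 1,
      WFL s 0 1 (fun t => gegen (s + 1 / 2) n (2 * t - 1)) x
        ((Real.Gamma (2 * s + n + 1) / (n.factorial : ℝ)) *
          gegen (s + 1 / 2) n (2 * x - 1)) := by
  intro x hx
  have hG : 0 < Real.Gamma (2 * s + 1) := Real.Gamma_pos_of_pos (by linarith [hs.1])
  have h := (main_tendsto hs hx
    (2 * s * (Real.Gamma s * Real.Gamma (1 - s)) / Real.Gamma (2 * s + 1))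
    (by field_simp) n).const_mul (C1 s / (2 * s))
  have hc := const_eq hs
  unfold WFL
  convert! h using 2
  · rw [EE]
    congr 1
    refine setIntegral_congr_fun (measurableSet_SS x _) ?_
    intro y hy
    have hy' := hy.1
    have hd := (hasDerivAt_w (s := s) hy'.1 hy'.2 (hasDerivAt_phi s n y)).deriv
    simp only [sub_zero]
    rw [hd, kr, QQ]
  · rw [← mul_assoc, ← mul_div_assoc, hc, div_self hG.ne', one_mul]
end
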